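/- arXiv:2001.00654 — 2 statements merged into one kernel-verified Lean document; each statement's English description precedes it below -/
import Mathlib

section
/- Let n ≥ 1 and let (B_m(t))_{m ≥ 0} be the family of polynomials in ℚ[t] determined by the formal power series identities B_m(t) = (1−t)^{m+1} · Σ_{k ≥ 0} (2k+1)^m t^k for every m ≥ 0. Then the following identity of polynomials in ℚ[t] holds: n! · Σ_{π ∈ 𝔦_n} 4^{lpk(π)} t^{lpk(π)} (1+t)^{n−2·lpk(π)} = Σ_{k=0}^{n} d_{n,k} · B_k(t) (1−t)^{n−k}, where d_{n,k} is the number of permutations π of [n] such that π² has exactly k odd cycles (cycles of odd length, counting fixed points as cycles of length 1). (This is the formula ((1+t)^n/(1−t)^{n+1}) I_n^{lpk}(4t/(1+t)²) = Σ_{k=0}^n (d_{n,k}/n!) B_k(t)/(1−t)^{k+1}, where I_n^{lpk}(t) = Σ_{π ∈ 𝔦_n} t^{lpk(π)}, with denominators cleared; note 2·lpk(π) ≤ n for every π ∈ S_n.) -/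
open scoped Classical

noncomputable section

def oneLine (n : ℕ) (π : Equiv.Perm (Fin n)) (i : ℕ) : ℕ :=
  if h : 1 ≤ i ∧ i ≤ n then (π ⟨i - 1, by omega⟩).val + 1 else 0

def des (n : ℕ) (π : Equiv.Perm (Fin n)) : ℕ :=
  ((Finset.Icc 1 (n - 1)).filter fun i => oneLine n π (i + 1) < oneLine n π i).card

def pk (n : ℕ) (π : Equiv.Perm (Fin n)) : ℕ :=
  ((Finset.Icc 2 (n - 1)).filter fun i =>
    oneLine n π (i - 1) < oneLine n π i ∧ oneLine n π (i + 1) < oneLine n π i).card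

def lpk (n : ℕ) (π : Equiv.Perm (Fin n)) : ℕ :=
  ((Finset.Icc 1 (n - 1)).filter fun i =>
    oneLine n π (i - 1) < oneLine n π i ∧ oneLine n π (i + 1) < oneLine n π i).card

def pval (n : ℕ) (π : Equiv.Perm (Fin n)) : ℕ :=
  ((Finset.Icc 2 (n - 1)).filter fun i =>
    oneLine n π i < oneLine n π (i - 1) ∧ oneLine n π i < oneLine n π (i + 1)).card

def udr (n : ℕ) (π : Equiv.Perm (Fin n)) : ℕ := lpk n π + pval n π + 1

def fullCycleType (n : ℕ) (π : Equiv.Perm (Fin n)) : Multiset ℕ :=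
  π.cycleType + Multiset.replicate (n - π.support.card) 1

def numCycles (n : ℕ) (π : Equiv.Perm (Fin n)) : ℕ := Multiset.card (fullCycleType n π)

def numOddCycles (n : ℕ) (π : Equiv.Perm (Fin n)) : ℕ :=
  Multiset.card ((fullCycleType n π).filter fun p => p % 2 = 1)

def IsCyclicPerm (n : ℕ) (π : Equiv.Perm (Fin n)) : Prop :=
  fullCycleType n π = {n}

def cyclicSet (n : ℕ) : Finset (Equiv.Perm (Fin n)) :=
  Finset.univ.filter fun π => IsCyclicPerm n π

def invSet (n : ℕ) : Finset (Equiv.Perm (Fin n)) :=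
  Finset.univ.filter fun π => π ^ 2 = 1

def eulerianA (m : ℕ) : Polynomial ℚ :=
  ∑ π : Equiv.Perm (Fin m), Polynomial.X ^ (des m π + 1)

def peakP (m : ℕ) : Polynomial ℚ :=
  ∑ π : Equiv.Perm (Fin m), Polynomial.X ^ (pk m π + 1)

def leftPeakP (m : ℕ) : Polynomial ℚ :=
  ∑ π : Equiv.Perm (Fin m), Polynomial.X ^ (lpk m π)

def cnk (n k : ℕ) : ℕ :=
  (Finset.univ.filter fun π : Equiv.Perm (Fin n) =>
    (∀ p ∈ fullCycleType n π, ¬ (4 ∣ p)) ∧ numCycles n (π ^ 2) = k).card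

def bnk (n k : ℕ) : ℕ :=
  (Finset.univ.filter fun π : Equiv.Perm (Fin n) => numCycles n (π ^ 2) = k).card

def dnk (n k : ℕ) : ℕ :=
  (Finset.univ.filter fun π : Equiv.Perm (Fin n) => numOddCycles n (π ^ 2) = k).card



def okStep (d : Prop) (u v : ℕ) : Prop := u < v ∨ (u = v ∧ (v % 2 = 0 ↔ ¬ d))

def Wc (D : ℕ → Prop) : ℕ → ℕ → ℕ
  | 0, _ => 1
  | m + 1, v => ∑ u ∈ Finset.range (v + 1), if okStep (D m) u v then Wc D m u else 0

lemma Wc_count (D : ℕ → Prop) (N : ℕ) (m : ℕ) (v : Fin N) :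
    (∑ f : Fin (m + 1) → Fin N, if ((∀ i : Fin m, okStep (D i) (f i.castSucc) (f i.succ)) ∧
      f (Fin.last m) = v) then 1 else 0) = Wc D m v := by
  induction m generalizing v with
  | zero =>
    simp only [Wc]
    rw [Finset.sum_boole]
    simp only [Nat.cast_id]
    rw [Finset.card_eq_one]
    refine ⟨fun _ => v, ?_⟩
    ext f
    simp only [Finset.mem_filter, Finset.mem_univ, true_and, Finset.mem_singleton]
    constructor
    · rintro ⟨_, h⟩
      funext i
      rw [← h]; congr 1; exact Subsingleton.elim (α := Fin 1) _ _
    · rintro rfl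
      exact ⟨fun i => i.elim0, rfl⟩
  | succ m ih =>
    rw [← (Fin.snocEquiv (fun _ : Fin (m + 2) => Fin N)).sum_comp, Fintype.sum_prod_type]
    simp only [Fin.snocEquiv, Equiv.coe_fn_mk, Fin.forall_fin_succ', Fin.snoc_castSucc, Fin.snoc_last,
      Fin.succ_castSucc, Fin.succ_last, Fin.val_castSucc, Fin.val_last]
    rw [Finset.sum_eq_single v]
    · simp only [and_true, Wc]
      have : ∀ f : Fin (m+1) → Fin N, (if ((∀ i : Fin m, okStep (D i) (f i.castSucc) (f i.succ)) ∧ okStep (D m) (f (Fin.last m)) v) then 1 else 0) = ∑ u : Fin N, if okStep (D m) u v then (if ((∀ i : Fin m, okStep (D i) (f i.castSucc) (f i.succ)) ∧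
      f (Fin.last m) = u) then 1 else 0) else 0 := by
        intro f
        rw [Finset.sum_eq_single (f (Fin.last m))]
        · by_cases h1 : okStep (D m) (f (Fin.last m)) v <;> simp [h1]
        · intro b _ hb
          simp [hb.symm]
        · simp
      simp only [this]
      rw [Finset.sum_comm]
      have h2 : ∀ u : Fin N, (∑ f : Fin (m+1) → Fin N, if okStep (D m) u v then (if ((∀ i : Fin m, okStep (D i) (f i.castSucc) (f i.succ)) ∧
      f (Fin.last m) = u) then 1 else 0) else 0) = if okStep (D m) u v then Wc D m u else 0 := by
        intro u
        by_cases h1 : okStep (D m) u v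
        · simp only [h1, if_true]; exact ih u
        · simp [h1]
      rw [Finset.sum_congr rfl (fun u _ => h2 u)]
      rw [Fin.sum_univ_eq_sum_range (fun u => if okStep (D m) u v then Wc D m u else 0) N]
      symm
      apply Finset.sum_subset
      · intro x hx; simp at hx ⊢; omega
      · intro x hx hx2
        simp at hx hx2
        rw [if_neg]; unfold okStep; omega
    · intro b _ hb
      simp [hb]
    · simp

def Cc (D : ℕ → Prop) (m v : ℕ) : ℕ := ∑ u ∈ Finset.range v, Wc D m u

lemma count_total (D : ℕ → Prop) (N : ℕ) (m : ℕ) :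
    (Finset.univ.filter fun f : Fin (m + 1) → Fin N =>
      (∀ i : Fin m, okStep (D i) (f i.castSucc) (f i.succ))).card = Cc D m N := by
  unfold Cc
  rw [← Fin.sum_univ_eq_sum_range (fun u => Wc D m u) N]
  rw [← Finset.sum_congr rfl (fun v _ => Wc_count D N m v), Finset.sum_comm, Finset.card_filter]
  apply Finset.sum_congr rfl
  intro f _
  rw [Finset.sum_eq_single (f (Fin.last m))]
  · simp
  · intro b _ hb; simp [hb.symm]
  · simp

lemma Wc_succ (D : ℕ → Prop) (m v : ℕ) :
    Wc D (m+1) v = if (v % 2 = 0 ↔ ¬ D m) then Cc D m (v+1) else Cc D m v := by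
  simp only [Wc, Cc]
  have h0 : ∑ u ∈ Finset.range v, (if okStep (D m) u v then Wc D m u else 0) = ∑ u ∈ Finset.range v, Wc D m u := by
    apply Finset.sum_congr rfl
    intro u hu
    rw [if_pos]; left; simpa using hu
  rw [Finset.sum_range_succ, h0]
  have : okStep (D m) v v ↔ (v % 2 = 0 ↔ ¬ D m) := by simp [okStep]
  by_cases h : (v % 2 = 0 ↔ ¬ D m)
  · rw [if_pos (this.2 h), if_pos h, Finset.sum_range_succ]
  · rw [if_neg (fun h' => h (this.1 h')), if_neg h, add_zero]

open PowerSeries in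
lemma gf_step (D : ℕ → Prop) (m : ℕ) :
   let E : PowerSeries ℚ := mk fun j => (Wc D m (2*j) : ℚ)
   let O : PowerSeries ℚ := X * mk fun j => (Wc D m (2*j+1) : ℚ)
   let G : PowerSeries ℚ := mk fun j => (Cc D m (2*j+1) : ℚ)
   let H : PowerSeries ℚ := mk fun j => (Cc D m (2*j) : ℚ)
   (1 - X) * G = E + O ∧ (1 - X) * H = O + X * E ∧ H = X * mk fun j => (Cc D m (2*j+2) : ℚ) := by
  intro E O G H
  refine ⟨?_, ?_, ?_⟩
  · ext j
    cases j with
    | zero => simp [E, O, G, sub_mul, Cc]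
    | succ j =>
      simp only [E, O, G, sub_mul, one_mul, map_sub, map_add, coeff_succ_X_mul, coeff_mk]
      simp only [Cc, show 2 * (j+1) + 1 = (2*j+1)+1+1 by ring, Finset.sum_range_succ]
      simp only [show 2 * (j+1) = (2*j+1)+1 by ring]
      push_cast; ring
  · ext j
    cases j with
    | zero => simp [E, O, H, sub_mul, Cc]
    | succ j =>
      simp only [E, O, H, sub_mul, one_mul, map_sub, map_add, coeff_succ_X_mul, coeff_mk]
      simp only [Cc, show 2 * (j+1) = (2*j)+1+1 by ring, Finset.sum_range_succ]
      push_cast; ring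
  · ext j
    cases j with
    | zero => simp [H, Cc]
    | succ j =>
      simp only [H, coeff_succ_X_mul, coeff_mk]
      rfl

open PowerSeries in
lemma gf_inv (D U : ℕ → Prop) (M : ℕ) (hU0 : U 0) (hU : ∀ i < M, (U (i+1) ↔ ¬ D i)) (m : ℕ) (hm : m ≤ M) :
   let E : PowerSeries ℚ := mk fun j => (Wc D m (2*j) : ℚ)
   let O : PowerSeries ℚ := X * mk fun j => (Wc D m (2*j+1) : ℚ)
   let l := ((Finset.range m).filter fun i => D i ∧ U i).card
   ∃ r, (U m ∧ m = 2 * l + r ∧ (1 - X)^(m+1) * E = (4 * X)^l * (1 + X)^r ∧ O = X * E) ∨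
    (¬ U m ∧ ∃ q, l = q + 1 ∧ m = 2 * q + 1 + r ∧ (1 - X)^(m+1) * E = 2 * X * (4 * X)^q * (1 + X)^r ∧ O = E) := by
  induction m with
  | zero =>
    intro E O l
    refine ⟨0, Or.inl ⟨hU0, by simp [l], ?_, ?_⟩⟩
    · have := PowerSeries.mk_one_mul_one_sub_eq_one ℚ
      simp only [E, Wc, l]
      rw [mul_comm] at this
      simpa [Pi.one_def] using this
    · simp [E, O, Wc]
  | succ m ih =>
    intro E O l
    obtain ⟨hG, hH, hH2⟩ := gf_step D m
    obtain ⟨r, h⟩ := ih (by omega)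
    have hUm := hU m (by omega)
    set E0 : PowerSeries ℚ := mk fun j => (Wc D m (2*j) : ℚ)
    set O0 : PowerSeries ℚ := X * mk fun j => (Wc D m (2*j+1) : ℚ)
    set G : PowerSeries ℚ := mk fun j => (Cc D m (2*j+1) : ℚ) with hGd
    set H : PowerSeries ℚ := mk fun j => (Cc D m (2*j) : ℚ) with hHd
    have hl : l = ((Finset.range m).filter fun i => D i ∧ U i).card + if D m ∧ U m then 1 else 0 := by
      simp only [l]
      rw [Finset.range_add_one, Finset.filter_insert]
      split_ifs
      · rw [Finset.card_insert_of_notMem (by simp)]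
      · simp
    set l0 := ((Finset.range m).filter fun i => D i ∧ U i).card
    by_cases hD : D m
    · have hE : E = H := by
        ext j; simp [E, H, Wc_succ, hD]
      have hO : O = H := by
        rw [hH2]; simp only [O]; congr 1; ext j; simp [Wc_succ, hD]
      rcases h with ⟨hu, hr, h1, h2⟩ | ⟨hu, q, hq, hr, h1, h2⟩
      · refine ⟨r, Or.inr ⟨by tauto, l0, ?_, by omega, ?_, by rw [hE, hO]⟩⟩
        · simp [hl, hD, hu]
        · rw [hE, pow_succ, mul_assoc, hH, h2]
          linear_combination 2 * X * h1
      · refine ⟨r+1, Or.inr ⟨by tauto, q, ?_, by omega, ?_, by rw [hE, hO]⟩⟩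
        · simp [hl, hD, hu, hq]
        · rw [hE, pow_succ, mul_assoc, hH, h2]
          linear_combination (1 + X) * h1
    · have hE : E = G := by
        ext j; simp [E, G, Wc_succ, hD]
      have hO : O = X * G := by
        simp only [O]; congr 1; ext j; simp [Wc_succ, hD, G]
      rcases h with ⟨hu, hr, h1, h2⟩ | ⟨hu, q, hq, hr, h1, h2⟩
      · refine ⟨r+1, Or.inl ⟨by tauto, ?_, ?_, by rw [hE, hO]⟩⟩
        · simp [hl, hD]; omega
        · rw [hE, pow_succ, mul_assoc, hG, h2]
          simp only [hl, hD, false_and, if_false, add_zero]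
          linear_combination (1 + X) * h1
      · refine ⟨r, Or.inl ⟨by tauto, ?_, ?_, by rw [hE, hO]⟩⟩
        · simp [hl, hD]; omega
        · rw [hE, pow_succ, mul_assoc, hG, h2]
          simp only [hl, hD, false_and, if_false, add_zero]
          rw [hq]
          linear_combination 2 * h1

open PowerSeries in
lemma gf_final (D U : ℕ → Prop) (m : ℕ) (hU0 : U 0) (hU : ∀ i < m, (U (i+1) ↔ ¬ D i)) :
   let l := ((Finset.range m).filter fun i => D i ∧ U i).card
   (1 - X)^(m+2) * (mk fun j => (Cc D m (2*j+1) : ℚ)) = 4^l * X^l * (1 + X)^(m + 1 - 2 * l) := by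
  intro l
  obtain ⟨hG, hH, hH2⟩ := gf_step D m
  obtain ⟨r, h⟩ := gf_inv D U m hU0 hU m le_rfl
  rw [pow_succ, mul_assoc, hG, ← mul_pow]
  change (_ ∧ m = 2 * l + r ∧ _ = (4 * X)^l * _ ∧ _) ∨ (_ ∧ ∃ q, l = q + 1 ∧ _) at h
  rcases h with ⟨hu, hr, h1, h2⟩ | ⟨hu, q, hq, hr, h1, h2⟩
  · rw [h2, show m + 1 - 2 * l = r + 1 by omega]
    linear_combination (1 + X) * h1
  · rw [h2, show m + 1 - 2 * l = r by omega, hq]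
    linear_combination 2 * h1


def zC (s : Multiset ℕ) : ℕ := s.prod * ∏ n ∈ s.toFinset, (s.count n).factorial

lemma zC_cons (m : ℕ) (t : Multiset ℕ) : zC (m ::ₘ t) = m * (t.count m + 1) * zC t := by
  unfold zC
  have h1 : ∏ n ∈ t.toFinset, (t.count n).factorial = ∏ n ∈ (m ::ₘ t).toFinset, (t.count n).factorial := by
    apply Finset.prod_subset
    · intro x; simp; tauto
    · intro x _ hx
      simp at hx
      simp [Multiset.count_eq_zero_of_notMem hx]
  have hm : m ∈ (m ::ₘ t).toFinset := by simp
  rw [h1, ← Finset.mul_prod_erase _ _ hm, ← Finset.mul_prod_erase _ _ hm]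
  have h2 : ∏ x ∈ ((m ::ₘ t).toFinset).erase m, ((m ::ₘ t).count x).factorial = ∏ x ∈ ((m ::ₘ t).toFinset).erase m, (t.count x).factorial := by
    apply Finset.prod_congr rfl
    intro x hx
    rw [Multiset.count_cons_of_ne (Finset.ne_of_mem_erase hx)]
  rw [h2, Multiset.count_cons_self, Nat.factorial_succ, Multiset.prod_cons]
  ring

def PS (n : ℕ) : Finset (Multiset ℕ) := Finset.univ.image (Nat.Partition.parts : Nat.Partition n → Multiset ℕ)

lemma mem_PS {n : ℕ} {s : Multiset ℕ} : s ∈ PS n ↔ s.sum = n ∧ ∀ i ∈ s, 0 < i := by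
  simp only [PS, Finset.mem_image, Finset.mem_univ, true_and]
  constructor
  · rintro ⟨p, rfl⟩
    exact ⟨p.parts_sum, fun i hi => p.parts_pos hi⟩
  · rintro ⟨h1, h2⟩
    exact ⟨⟨s, fun {i} hi => h2 i hi, h1⟩, rfl⟩

lemma zC_ne (s : Multiset ℕ) (h : ∀ i ∈ s, 0 < i) : (zC s : ℚ) ≠ 0 := by
  unfold zC
  have : s.prod ≠ 0 := by
    apply Multiset.prod_ne_zero
    intro h0; exact absurd (h 0 h0) (by simp)
  have h2 : ∏ n ∈ s.toFinset, (s.count n).factorial ≠ 0 := by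
    rw [Finset.prod_ne_zero_iff]; intro a _; exact Nat.factorial_ne_zero _
  exact_mod_cast mul_ne_zero this h2

def bC (w : ℕ → ℚ) (n : ℕ) : ℚ := ∑ s ∈ PS n, (s.map w).prod / zC s

lemma bC_rec (w : ℕ → ℚ) (n : ℕ) : (n : ℚ) * bC w n = ∑ m ∈ Finset.Icc 1 n, w m * bC w (n - m) := by
  unfold bC
  have h1 : (n : ℚ) * ∑ s ∈ PS n, (s.map w).prod / zC s =
      ∑ s ∈ PS n, ∑ m ∈ s.toFinset, ((m : ℚ) * s.count m) * ((s.map w).prod / zC s) := by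
    rw [Finset.mul_sum]
    apply Finset.sum_congr rfl
    intro s hs
    rw [← Finset.sum_mul]
    congr 1
    have := Finset.sum_multiset_count s
    rw [(mem_PS.1 hs).1] at this
    rw [this]; push_cast; apply Finset.sum_congr rfl; intros; simp [mul_comm]
  rw [h1]
  simp only [Finset.mul_sum]
  rw [Finset.sum_sigma', Finset.sum_sigma']
  refine Finset.sum_bij' (fun x _ => ⟨x.2, x.1.erase x.2⟩) (fun x _ => ⟨x.1 ::ₘ x.2, x.1⟩) ?_ ?_ ?_ ?_ ?_
  · rintro ⟨s, m⟩ h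
    simp only [Finset.mem_sigma, Multiset.mem_toFinset, mem_PS, Finset.mem_Icc] at h ⊢
    obtain ⟨⟨h1, h2⟩, h3⟩ := h
    obtain ⟨t, rfl⟩ := Multiset.exists_cons_of_mem h3
    simp at h1 h2 ⊢
    refine ⟨⟨by omega, by omega⟩, by omega, h2.2⟩
  · rintro ⟨m, t⟩ h
    simp only [Finset.mem_sigma, Multiset.mem_toFinset, mem_PS, Finset.mem_Icc] at h ⊢
    obtain ⟨h3, ⟨h1, h2⟩⟩ := h
    simp
    refine ⟨by omega, by omega, h2⟩
  · rintro ⟨s, m⟩ h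
    simp only [Finset.mem_sigma, Multiset.mem_toFinset] at h
    simp [Multiset.cons_erase h.2]
  · rintro ⟨m, t⟩ h
    simp
  · rintro ⟨s, m⟩ h
    simp only [Finset.mem_sigma, Multiset.mem_toFinset, mem_PS] at h ⊢
    obtain ⟨⟨h1, h2⟩, h3⟩ := h
    obtain ⟨t, rfl⟩ := Multiset.exists_cons_of_mem h3
    simp only [Multiset.erase_cons_head, Multiset.map_cons, Multiset.prod_cons, zC_cons, Multiset.count_cons_self]
    have hz := zC_ne t (fun i hi => h2 i (by simp [hi]))
    have hm : (m : ℚ) ≠ 0 := by have := h2 m (by simp); positivity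
    push_cast
    field_simp

lemma card_part (n : ℕ) (s : Multiset ℕ) (hs : s ∈ PS n) :
    (Finset.univ.filter fun σ : Equiv.Perm (Fin n) =>
      σ.cycleType + Multiset.replicate (n - σ.support.card) 1 = s).card * zC s = n.factorial := by
  obtain ⟨h1, h2⟩ := mem_PS.1 hs
  have key := Equiv.Perm.card_of_cycleType_mul_eq (Fin n) (s.filter (2 ≤ ·))
  have hdec : s = s.filter (2 ≤ ·) + Multiset.replicate (s.count 1) 1 := by
    conv_lhs => rw [← Multiset.filter_add_not (2 ≤ ·) s]
    congr 1
    rw [← Multiset.filter_eq']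
    apply Multiset.filter_congr
    intro x hx; have := h2 x hx; omega
  have hsum : n = (s.filter (2 ≤ ·)).sum + s.count 1 := by
    have := congrArg Multiset.sum hdec
    rw [h1, Multiset.sum_add] at this; simpa using this
  have hz : zC s = (n - (s.filter (2 ≤ ·)).sum).factorial * (s.filter (2 ≤ ·)).prod * ∏ k ∈ (s.filter (2 ≤ ·)).toFinset, ((s.filter (2 ≤ ·)).count k).factorial := by
    have e1 : n - (s.filter (2 ≤ ·)).sum = s.count 1 := by omega
    have e2 : s.prod = (s.filter (2 ≤ ·)).prod := by
      conv_lhs => rw [hdec]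
      simp
    have e3 : ∏ k ∈ s.toFinset, (s.count k).factorial = (s.count 1).factorial * ∏ k ∈ (s.filter (2 ≤ ·)).toFinset, ((s.filter (2 ≤ ·)).count k).factorial := by
      have : ∏ k ∈ s.toFinset, (s.count k).factorial = ∏ k ∈ insert 1 (s.filter (2 ≤ ·)).toFinset, (s.count k).factorial := by
        apply Finset.prod_subset
        · intro x hx; simp at hx ⊢; have := h2 x hx; rcases Nat.lt_or_ge x 2 with h | h
          · left; omega
          · right; exact ⟨hx, h⟩
        · intro x _ hx
          simp at hx
          simp [Multiset.count_eq_zero_of_notMem hx]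
      rw [this, Finset.prod_insert (by simp)]
      congr 1
      apply Finset.prod_congr rfl
      intro x hx
      simp at hx
      rw [Multiset.count_filter_of_pos hx.2]
    rw [zC, e1, e2, e3]; ring
  rw [Fintype.card_fin, if_pos ⟨by omega, fun a ha => (Multiset.mem_filter.1 ha).2⟩] at key
  rw [hz, ← key]
  congr 2
  ext σ
  simp only [Finset.mem_filter, Finset.mem_univ, true_and]
  have hsup := σ.sum_cycleType
  constructor
  · intro h
    rw [← h, Multiset.filter_add, Multiset.filter_eq_self.2 (fun _ => Equiv.Perm.two_le_of_mem_cycleType)]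
    simp [Multiset.filter_eq_nil, Multiset.mem_replicate]
  · intro h
    rw [← hsup, h]
    conv_rhs => rw [hdec]
    congr 2; omega

lemma perm_sum (w : ℕ → ℚ) (n : ℕ) : ∑ σ : Equiv.Perm (Fin n),
    ((σ.cycleType + Multiset.replicate (n - σ.support.card) 1).map w).prod = n.factorial * bC w n := by
  have hmem : ∀ σ ∈ (Finset.univ : Finset (Equiv.Perm (Fin n))), (σ.cycleType + Multiset.replicate (n - σ.support.card) 1) ∈ PS n := by
    intro σ _
    rw [mem_PS]
    refine ⟨?_, ?_⟩
    · rw [Multiset.sum_add, σ.sum_cycleType]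
      have := σ.support.card_le_univ
      simp at this ⊢; omega
    · intro i hi
      rw [Multiset.mem_add] at hi
      rcases hi with h | h
      · have := Equiv.Perm.two_le_of_mem_cycleType h; omega
      · rw [Multiset.eq_of_mem_replicate h]; norm_num
  rw [← Finset.sum_fiberwise_of_maps_to hmem, bC, Finset.mul_sum]
  apply Finset.sum_congr rfl
  intro s hs
  rw [Finset.sum_congr rfl (g := fun _ => (s.map w).prod) (by intro σ hσ; simp at hσ; rw [hσ])]
  rw [Finset.sum_const, nsmul_eq_mul, ← card_part n s hs]
  have := zC_ne s (mem_PS.1 hs).2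
  push_cast
  field_simp



lemma minPer_eq {n : ℕ} (σ c : Equiv.Perm (Fin n)) (x : Fin n) (hc : c ∈ σ.cycleFactorsFinset)
    (hx : x ∈ c.support) : Function.minimalPeriod σ x = c.support.card := by
  have hcc : c.IsCycle := (Equiv.Perm.mem_cycleFactorsFinset_iff.1 hc).1
  have e : c = σ.cycleOf x := (Equiv.Perm.cycle_is_cycleOf hx hc)
  have key : ∀ k, Function.minimalPeriod σ x ∣ k ↔ c.support.card ∣ k := by
    intro k
    rw [← Function.isPeriodicPt_iff_minimalPeriod_dvd, ← hcc.orderOf, orderOf_dvd_iff_pow_eq_one,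
      hcc.pow_eq_one_iff' (Equiv.Perm.mem_support.1 hx), e, Equiv.Perm.cycleOf_pow_apply_self]
    rw [Function.IsPeriodicPt, Function.IsFixedPt, Equiv.Perm.iterate_eq_pow]
  exact Nat.dvd_antisymm ((key _).2 dvd_rfl) ((key _).1 dvd_rfl)

lemma sum_minPer {n : ℕ} (σ : Equiv.Perm (Fin n)) (φ : ℕ → ℚ) :
    ∑ x, φ (Function.minimalPeriod σ x) =
     ((σ.cycleType + Multiset.replicate (n - σ.support.card) 1).map (fun m : ℕ => (m:ℚ) * φ m)).sum := by
  rw [Multiset.map_add, Multiset.sum_add, ← Finset.sum_add_sum_compl σ.support]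
  congr 1
  · rw [Equiv.Perm.cycleType_def, Multiset.map_map]
    have hm : ∀ x ∈ σ.support, σ.cycleOf x ∈ σ.cycleFactorsFinset := fun x hx =>
      Equiv.Perm.cycleOf_mem_cycleFactorsFinset_iff.2 hx
    rw [← Finset.sum_fiberwise_of_maps_to hm]
    change _ = ∑ c ∈ σ.cycleFactorsFinset, (((c.support.card : ℕ) : ℚ) * φ c.support.card)
    apply Finset.sum_congr rfl
    intro c hc
    have : (σ.support.filter fun x => σ.cycleOf x = c) = c.support := by
      ext x
      simp only [Finset.mem_filter]
      constructor
      · rintro ⟨h1, rfl⟩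
        rw [Equiv.Perm.mem_support_cycleOf_iff]; exact ⟨Equiv.Perm.SameCycle.refl _ _, h1⟩
      · intro h
        exact ⟨Equiv.Perm.mem_cycleFactorsFinset_support_le hc h, (Equiv.Perm.cycle_is_cycleOf h hc).symm⟩
    rw [this, Finset.sum_congr rfl (g := fun _ => φ c.support.card)
      (fun x hx => by rw [minPer_eq σ c x hc hx])]
    simp
  · rw [Finset.sum_congr rfl (g := fun _ => φ 1)]
    · simp [Finset.card_compl]
    · intro x hx
      simp at hx
      congr 1
      rw [Function.minimalPeriod_eq_one_iff_isFixedPt]; exact hx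

def gC (m : ℕ) : ℕ := if m % 2 = 1 then 1 else if m % 4 = 2 then 2 else 0

lemma card_filter_odd (s : Multiset ℕ) (hs : ∀ i ∈ s, 0 < i) :
   ((Multiset.card (s.filter fun p => p % 2 = 1) : ℕ) : ℚ) = (s.map (fun m : ℕ => (m:ℚ) * (if m % 2 = 1 then 1 / (m : ℚ) else 0))).sum := by
  induction s using Multiset.induction_on with
  | empty => simp
  | cons a s ih =>
    have ha := hs a (by simp)
    have : (a : ℚ) ≠ 0 := by positivity
    rw [Multiset.map_cons, Multiset.sum_cons, ← ih (fun i hi => hs i (by simp [hi]))]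
    by_cases h : a % 2 = 1
    · rw [Multiset.filter_cons_of_pos (p := fun p => p % 2 = 1) s h]; simp [h]; field_simp; ring
    · rw [Multiset.filter_cons_of_neg (p := fun p => p % 2 = 1) s h]; simp [h]

lemma fct_pos {n : ℕ} (σ : Equiv.Perm (Fin n)) : ∀ i ∈ σ.cycleType + Multiset.replicate (n - σ.support.card) 1, 0 < i := by
  intro i hi
  rw [Multiset.mem_add] at hi
  rcases hi with h | h
  · have := Equiv.Perm.two_le_of_mem_cycleType h; omega
  · rw [Multiset.eq_of_mem_replicate h]; norm_num

lemma odd_sq {n : ℕ} (σ : Equiv.Perm (Fin n)) :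
    Multiset.card (((σ^2).cycleType + Multiset.replicate (n - (σ^2).support.card) 1).filter fun p => p % 2 = 1)
     = ((σ.cycleType + Multiset.replicate (n - σ.support.card) 1).map gC).sum := by
  have h1 := card_filter_odd _ (fct_pos (σ^2))
  rw [← sum_minPer (σ^2) (fun m => if m % 2 = 1 then 1 / (m : ℚ) else 0)] at h1
  have h2 : ∀ x, Function.minimalPeriod ⇑(σ^2) x = Function.minimalPeriod σ x / Nat.gcd (Function.minimalPeriod σ x) 2 := by
    intro x
    rw [← Function.minimalPeriod_iterate_eq_div_gcd (by norm_num), Equiv.Perm.iterate_eq_pow]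
  simp only [h2] at h1
  rw [sum_minPer σ (fun k => if (k / Nat.gcd k 2) % 2 = 1 then 1 / ((k / Nat.gcd k 2 : ℕ) : ℚ) else 0)] at h1
  have h3 : ((σ.cycleType + Multiset.replicate (n - σ.support.card) 1).map (fun k : ℕ => (k:ℚ) * (if (k / Nat.gcd k 2) % 2 = 1 then 1 / ((k / Nat.gcd k 2 : ℕ) : ℚ) else 0)))
   = ((σ.cycleType + Multiset.replicate (n - σ.support.card) 1).map (fun k : ℕ => ((gC k : ℕ) : ℚ))) := by
    apply Multiset.map_congr rfl
    intro k hk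
    have hk0 := fct_pos σ k hk
    have hq : (k : ℚ) ≠ 0 := by positivity
    unfold gC
    rcases Nat.even_or_odd k with he | ho
    · obtain ⟨j, rfl⟩ := he.two_dvd
      have : Nat.gcd (2*j) 2 = 2 := by simp
      rw [this, Nat.mul_div_cancel_left j (by norm_num)]
      by_cases hj : j % 2 = 1
      · rw [if_pos hj, if_neg (by omega), if_pos (by omega)]
        have hj0 : (j : ℚ) ≠ 0 := by
          have : 0 < j := by omega
          positivity
        push_cast; field_simp
      · rw [if_neg hj, if_neg (by omega), if_neg (by omega)]; simp
    · have h4 : Nat.gcd k 2 = 1 := by rw [Nat.coprime_two_right.2 ho]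
      have := Nat.odd_iff.1 ho
      rw [h4, Nat.div_one, if_pos this, if_pos this]
      field_simp; simp
  rw [h3] at h1
  have : ((σ.cycleType + Multiset.replicate (n - σ.support.card) 1).map (fun k : ℕ => ((gC k : ℕ) : ℚ))) = ((σ.cycleType + Multiset.replicate (n - σ.support.card) 1).map gC).map (Nat.cast) := by
    rw [Multiset.map_map]; rfl
  rw [this, ← Nat.cast_multiset_sum] at h1
  exact_mod_cast h1

lemma pow_odd_sq {n : ℕ} (σ : Equiv.Perm (Fin n)) (y : ℚ) :
    y ^ Multiset.card (((σ^2).cycleType + Multiset.replicate (n - (σ^2).support.card) 1).filter fun p => p % 2 = 1)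
     = ((σ.cycleType + Multiset.replicate (n - σ.support.card) 1).map (fun m => y ^ gC m)).prod := by
  rw [odd_sq]
  generalize (σ.cycleType + Multiset.replicate (n - σ.support.card) 1) = s
  induction s using Multiset.induction_on with
  | empty => simp
  | cons a s ih => simp [pow_add, ih]


def mixedS {N : ℕ} (s : Sym2 (Fin N)) : Prop := ∃ a ∈ s, ∃ b ∈ s, a.val % 2 ≠ b.val % 2

def admS {N : ℕ} (s : Sym2 (Fin N)) (d : ℕ) : Prop :=
  if s.IsDiag then True else (d % 2 = 0 ∧ (mixedS s → d ≤ 2))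

def FS {N : ℕ} (s : Sym2 (Fin N)) : PowerSeries ℚ := PowerSeries.mk fun d => if admS s d then 1 else 0

def eS {N : ℕ} (m : ℕ) (s : Sym2 (Fin N)) : ℚ :=
  if m = 0 then 0 else if s.IsDiag then 1 else if m % 2 = 1 then 0 else
    if mixedS s ∧ m % 4 = 0 then -1 else 1

def cS {N : ℕ} (s : Sym2 (Fin N)) : PowerSeries ℚ :=
  PowerSeries.mk fun m => (if s.IsDiag then 1 else 2) * eS m s

open PowerSeries in
lemma log_aux (F c P : PowerSeries ℚ) (h1 : P * F = 1) (h2 : P * c = - X * (derivative ℚ P)) :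
    X * derivative ℚ F = c * F := by
  have hP : P ≠ 0 := by rintro rfl; simp at h1
  have h4 := congrArg (derivative ℚ) h1
  rw [Derivation.leibniz, derivative_one, smul_eq_mul, smul_eq_mul] at h4
  apply mul_left_cancel₀ hP
  linear_combination X * h4 - F * h2

open PowerSeries in
lemma log_FS {N : ℕ} (s : Sym2 (Fin N)) : X * derivative ℚ (FS s) = cS s * FS s := by
  have dX2 : derivative ℚ (X^2 : PowerSeries ℚ) = C 2 * X := by
    rw [derivative_pow]; simp only [Nat.cast_ofNat, derivative_X, mul_one, Nat.add_one_sub_one, pow_one]; rfl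
  by_cases hd : s.IsDiag
  · have h1 : (1 - X) * FS s = 1 := by
      ext j
      cases j <;> simp [FS, admS, hd, sub_mul, coeff_succ_X_mul, coeff_one]
    have h2 : (1 - X) * cS s = X := by
      ext j
      rcases j with _ | _ | j <;> simp [cS, eS, hd, sub_mul, coeff_succ_X_mul, coeff_X]
    apply log_aux _ _ _ h1
    rw [h2, map_sub, derivative_one, derivative_X]; ring
  · by_cases hm : mixedS s
    · have h1 : FS s = 1 + X^2 := by
        ext j
        rcases j with _ | _ | _ | j <;> simp [FS, admS, hd, hm, coeff_one, coeff_X_pow]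
      have h2 : (1 + X^2) * cS s = C 2 * X^2 := by
        ext j
        rcases j with _ | _ | _ | j
        · simp [cS, eS, hd, hm, add_mul, coeff_X_pow_mul']
        · simp [cS, eS, hd, hm, add_mul, coeff_X_pow_mul', coeff_X_pow]
        · simp [cS, eS, hd, hm, add_mul, coeff_X_pow_mul', coeff_X_pow]
        · simp only [cS, eS, hd, hm, add_mul, coeff_X_pow_mul', coeff_X_pow, coeff_C_mul, map_add, one_mul, coeff_mk]
          simp
          split_ifs <;> first | omega | norm_num
      rw [h1, mul_comm (cS s), h2, map_add, derivative_one, dX2]; ring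
    · have h1 : (1 - X^2) * FS s = 1 := by
        ext j
        rcases j with _ | _ | j
        · simp [FS, admS, hd, hm, sub_mul, coeff_X_pow_mul']
        · simp [FS, admS, hd, hm, coeff_one, sub_mul, coeff_X_pow_mul']
        · simp [FS, admS, hd, hm, coeff_one, sub_mul, coeff_X_pow_mul', show (j+1+1)%2 = j % 2 by omega]
      have h2 : (1 - X^2) * cS s = C 2 * X^2 := by
        ext j
        rcases j with _ | _ | _ | j
        · simp [cS, eS, hd, hm, sub_mul, coeff_X_pow_mul']
        · simp [cS, eS, hd, hm, sub_mul, coeff_X_pow_mul', coeff_X_pow]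
        · simp [cS, eS, hd, hm, sub_mul, coeff_X_pow_mul', coeff_X_pow]
        · simp [cS, eS, hd, hm, sub_mul, coeff_X_pow_mul', coeff_X_pow, show (j+1+1+1)%2 = (j+1) % 2 by omega]
      apply log_aux _ _ _ h1
      rw [h2, map_sub, derivative_one, dX2]; ring

open PowerSeries in
lemma log_prod {N : ℕ} (S : Finset (Sym2 (Fin N))) :
    X * derivative ℚ (∏ s ∈ S, FS s) = (∑ s ∈ S, cS s) * ∏ s ∈ S, FS s := by
  induction S using Finset.induction_on with
  | empty => simp
  | insert a S ha ih =>
    rw [Finset.prod_insert ha, Finset.sum_insert ha, Derivation.leibniz, smul_eq_mul, smul_eq_mul]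
    have := log_FS a
    linear_combination (FS a) * ih + (∏ s ∈ S, FS s) * this

lemma sum_sym2 {N : ℕ} (e : Sym2 (Fin N) → ℚ) :
    ∑ s : Sym2 (Fin N), (if s.IsDiag then 1 else 2) * e s = ∑ a : Fin N, ∑ b : Fin N, e s(a, b) := by
  rw [← Fintype.sum_prod_type' (fun a b => e s(a,b))]
  rw [← Finset.sum_fiberwise (s := Finset.univ) (g := fun p : Fin N × Fin N => s(p.1, p.2))]
  apply Finset.sum_congr rfl
  intro s _
  rw [Finset.sum_congr rfl (g := fun _ => e s) (by intro p hp; simp at hp; rw [hp])]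
  rw [Finset.sum_const, nsmul_eq_mul]
  congr 1
  induction s using Sym2.ind with
  | _ a b =>
    by_cases h : a = b
    · subst h
      have : (Finset.univ.filter fun p : Fin N × Fin N => s(p.1, p.2) = s(a, a)) = {(a, a)} := by
        ext ⟨x, y⟩; simp
      rw [this]; simp
    · have : (Finset.univ.filter fun p : Fin N × Fin N => s(p.1, p.2) = s(a, b)) = {(a, b), (b, a)} := by
        ext ⟨x, y⟩; simp
      rw [this, Finset.card_pair (by simp [h])]; simp [h]

lemma mixedS_iff {N : ℕ} (a b : Fin N) : mixedS s(a,b) ↔ a.val % 2 ≠ b.val % 2 := by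
  unfold mixedS
  simp only [Sym2.mem_iff]
  constructor
  · rintro ⟨x, rfl | rfl, y, rfl | rfl, h⟩ <;> omega
  · intro h; exact ⟨a, Or.inl rfl, b, Or.inr rfl, h⟩


lemma alt_sum (k : ℕ) : ∑ a : Fin (2*k+1), (-1 : ℚ)^a.val = 1 := by
  rw [Fin.sum_univ_eq_sum_range (fun a => (-1 : ℚ)^a)]
  induction k with
  | zero => simp
  | succ k ih =>
    rw [show 2 * (k+1) + 1 = 2 * k + 1 + 1 + 1 by ring, Finset.sum_range_succ, Finset.sum_range_succ, ih]
    rw [pow_succ, pow_succ]; ring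

lemma sum_cS (k m : ℕ) (hm : m ≠ 0) :
    PowerSeries.coeff m (∑ s : Sym2 (Fin (2*k+1)), cS s) = (2*k+1 : ℚ)^gC m := by
  rw [map_sum]
  simp only [cS, PowerSeries.coeff_mk]
  rw [sum_sym2 (eS m)]
  unfold gC
  by_cases h1 : m % 2 = 1
  · simp [eS, hm, h1]
  · by_cases h2 : m % 4 = 2
    · simp [eS, hm, h1, h2]; ring
    · have h4 : m % 4 = 0 := by omega
      have : ∀ a b : Fin (2*k+1), eS m s(a,b) = (-1 : ℚ)^a.val * (-1)^b.val := by
        intro a b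
        simp only [eS, hm, h1, h4, mixedS_iff, if_false, and_true, Sym2.mk_isDiag_iff]
        by_cases hab : a = b
        · subst hab; simp [← mul_pow]
        · rw [if_neg hab]
          rcases Nat.even_or_odd a.val with ha | ha <;> rcases Nat.even_or_odd b.val with hb | hb <;>
            simp [ha.neg_one_pow, hb.neg_one_pow, Nat.even_iff.1, Nat.odd_iff.1, ha, hb]
      simp only [this, ← Finset.mul_sum, alt_sum]
      simp [h1, h2, alt_sum]

lemma coeff_rec (k n : ℕ) : (n : ℚ) * PowerSeries.coeff n (∏ s : Sym2 (Fin (2*k+1)), FS s) =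
   ∑ m ∈ Finset.Icc 1 n, (2*k+1 : ℚ)^gC m * PowerSeries.coeff (n-m) (∏ s : Sym2 (Fin (2*k+1)), FS s) := by
  cases n with
  | zero => simp
  | succ n =>
    have h := congrArg (PowerSeries.coeff (n+1)) (log_prod (Finset.univ : Finset (Sym2 (Fin (2*k+1)))))
    rw [PowerSeries.coeff_succ_X_mul, PowerSeries.coeff_derivative, PowerSeries.coeff_mul,
      Finset.Nat.sum_antidiagonal_eq_sum_range_succ_mk, Finset.sum_range_succ'] at h
    have h0 : PowerSeries.coeff 0 (∑ s : Sym2 (Fin (2*k+1)), cS s) = 0 := by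
      rw [map_sum]; simp [cS, eS]
    simp only [h0, zero_mul, add_zero] at h
    rw [mul_comm]; push_cast; rw [h]
    have e : Finset.Icc 1 (n+1) = Finset.Ico (0+1) (n+1+1) := by ext x; simp
    rw [e, ← Finset.sum_Ico_add' _ 0 (n+1) 1, Finset.range_eq_Ico]
    apply Finset.sum_congr rfl
    intro i _
    rw [sum_cS k (i+1) (by omega)]

lemma coeff_zero_FS (k : ℕ) : PowerSeries.coeff 0 (∏ s : Sym2 (Fin (2*k+1)), FS s) = 1 := by
  rw [PowerSeries.coeff_zero_eq_constantCoeff, map_prod]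
  apply Finset.prod_eq_one
  intro s _
  rw [← PowerSeries.coeff_zero_eq_constantCoeff_apply, FS, PowerSeries.coeff_mk, if_pos]
  simp [admS]

def compatB {n N : ℕ} (π : Equiv.Perm (Fin n)) (f : Fin n → Fin N) : Prop :=
  Monotone f ∧ ∀ i j, i < j → f i = f j →
    (((f i).val % 2 = 0 → π i < π j) ∧ ((f i).val % 2 = 1 → π j < π i))

lemma invol_apply {n : ℕ} {π : Equiv.Perm (Fin n)} (h : π ^ 2 = 1) (i : Fin n) : π (π i) = i := by
  rw [← Equiv.Perm.mul_apply, ← pow_two, h]; rfl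

def AB {n N : ℕ} (π : Equiv.Perm (Fin n)) (f : Fin n → Fin N) (a b : Fin N) : ℕ :=
  (Finset.univ.filter fun i => f i = a ∧ f (π i) = b).card

def dB {n N : ℕ} (π : Equiv.Perm (Fin n)) (f : Fin n → Fin N) (s : Sym2 (Fin N)) : ℕ :=
  (Finset.univ.filter fun i => s(f i, f (π i)) = s).card

lemma AB_symm {n N : ℕ} {π : Equiv.Perm (Fin n)} (hπ : π ^ 2 = 1) (f : Fin n → Fin N) (a b : Fin N) :
    AB π f a b = AB π f b a := by
  unfold AB
  apply Finset.card_equiv π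
  intro i
  simp [invol_apply hπ, and_comm]

lemma dB_eq {n N : ℕ} {π : Equiv.Perm (Fin n)} (hπ : π ^ 2 = 1) (f : Fin n → Fin N) (a b : Fin N) :
    dB π f s(a,b) = if a = b then AB π f a b else 2 * AB π f a b := by
  split_ifs with h
  · subst h
    unfold dB AB
    congr 1; ext i; simp
  · rw [two_mul]
    nth_rewrite 2 [AB_symm hπ]
    unfold dB AB
    rw [← Finset.card_union_of_disjoint]
    · congr 1; ext i; simp
    · rw [Finset.disjoint_left]
      intro i; simp
      intro h1 h2 h3; exact absurd (h1.symm.trans h3) h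

lemma AB_mixed {n N : ℕ} {π : Equiv.Perm (Fin n)} (hπ : π ^ 2 = 1) {f : Fin n → Fin N} (hc : compatB π f)
    (a b : Fin N) (hab : a.val % 2 ≠ b.val % 2) : AB π f a b ≤ 1 := by
  unfold AB
  have key : ∀ i j, i < j → f i = a → f j = a → f (π i) = b → f (π j) = b → False := by
    intro i j hij h1 h2 h3 h4
    obtain ⟨p1, p2⟩ := hc.2 i j hij (h1.trans h2.symm)
    rw [h1] at p1 p2
    by_cases ha : a.val % 2 = 0
    · have := (hc.2 _ _ (p1 ha) (h3.trans h4.symm)).2 (by rw [h3]; omega)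
      rw [invol_apply hπ, invol_apply hπ] at this
      exact absurd hij (not_lt_of_gt this)
    · have := (hc.2 _ _ (p2 (by omega)) (h4.trans h3.symm)).1 (by rw [h4]; omega)
      rw [invol_apply hπ, invol_apply hπ] at this
      exact absurd hij (not_lt_of_gt this)
  rw [Finset.card_le_one]
  intro i hi j hj
  simp at hi hj
  rcases lt_trichotomy i j with h | h | h
  · exact (key i j h hi.1 hj.1 hi.2 hj.2).elim
  · exact h
  · exact (key j i h hj.1 hi.1 hj.2 hi.2).elim

lemma dB_adm {n N : ℕ} {π : Equiv.Perm (Fin n)} (hπ : π ^ 2 = 1) {f : Fin n → Fin N} (hc : compatB π f)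
    (s : Sym2 (Fin N)) : admS s (dB π f s) := by
  induction s using Sym2.ind with
  | _ a b =>
    unfold admS
    simp only [Sym2.mk_isDiag_iff, dB_eq hπ, mixedS_iff]
    split_ifs with h
    refine ⟨by omega, fun h2 => ?_⟩
    have := AB_mixed hπ hc a b h2
    omega

lemma dB_sum {n N : ℕ} (π : Equiv.Perm (Fin n)) (f : Fin n → Fin N) : ∑ s, dB π f s = n := by
  unfold dB
  have := Finset.card_eq_sum_card_fiberwise (s := (Finset.univ : Finset (Fin n))) (t := Finset.univ)
    (f := fun i => s(f i, f (π i))) (fun _ _ => by simp)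
  simpa using this.symm

lemma perm_of_fibers {n : ℕ} {α : Type*} (p q : Fin n → α)
    (h : ∀ a, (Finset.univ.filter fun i => p i = a).card = (Finset.univ.filter fun i => q i = a).card) :
    ∃ σ : Equiv.Perm (Fin n), q ∘ σ = p := by
  have h2 : ∀ a, Nonempty ({i // p i = a} ≃ {i // q i = a}) := by
    intro a
    refine ⟨Fintype.equivOfCardEq ?_⟩
    rw [Fintype.card_subtype, Fintype.card_subtype, h a]
  let e := fun a => (h2 a).some
  refine ⟨(Equiv.sigmaFiberEquiv p).symm.trans ((Equiv.sigmaCongrRight e).trans (Equiv.sigmaFiberEquiv q)), ?_⟩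
  funext i
  exact (e (p i) ⟨i, rfl⟩).2

lemma pair_inj {n N : ℕ} {π π' : Equiv.Perm (Fin n)} (hπ : π ^ 2 = 1) (hπ' : π' ^ 2 = 1) {f f' : Fin n → Fin N}
    (hc : compatB π f) (hc' : compatB π' f') (h : ∀ s, dB π f s = dB π' f' s) : π = π' ∧ f = f' := by
  have hA : ∀ a b, AB π f a b = AB π' f' a b := by
    intro a b
    have := h s(a,b)
    rw [dB_eq hπ, dB_eq hπ'] at this
    split_ifs at this <;> omega
  obtain ⟨σ, hσ⟩ := perm_of_fibers (fun i => (f i, f (π i))) (fun i => (f' i, f' (π' i))) (by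
    rintro ⟨a, b⟩
    have := hA a b
    unfold AB at this
    simpa using this)
  let key : Fin N × Fin N → ℕ ×ₗ ℤ := fun p => toLex (p.1.val, if p.1.val % 2 = 0 then (p.2.val : ℤ) else - (p.2.val : ℤ))
  have hmono : ∀ (ρ : Equiv.Perm (Fin n)) (g : Fin n → Fin N), compatB ρ g → Monotone (fun i => key (g i, g (ρ i))) := by
    intro ρ g hg i j hij
    rcases hij.eq_or_lt with rfl | hlt
    · exact le_rfl
    simp only [key]
    rw [Prod.Lex.toLex_le_toLex]
    rcases (hg.1 hij).lt_or_eq with hl | he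
    · left; exact hl
    · right
      refine ⟨by rw [he], ?_⟩
      simp only [← he]
      obtain ⟨q1, q2⟩ := hg.2 i j hlt he
      split_ifs with hp
      · have := hg.1 (q1 hp).le
        have := Fin.le_def.1 this
        omega
      · have := hg.1 (q2 (by omega)).le
        have := Fin.le_def.1 this
        omega
  have m1 := hmono π f hc
  have m2 := hmono π' f' hc'
  have hk : Function.Injective key := by
    rintro ⟨a, b⟩ ⟨c, d⟩ hh
    simp only [key] at hh
    have hh := toLex.injective hh
    rw [Prod.mk.injEq] at hh
    obtain ⟨h1, h2⟩ := hh
    rw [h1] at h2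
    have : b.val = d.val := by split_ifs at h2 <;> omega
    rw [Prod.mk.injEq]; exact ⟨Fin.ext h1, Fin.ext this⟩
  have hpair : (fun i => (f i, f (π i))) = (fun i => (f' i, f' (π' i))) := by
    have e1 : (fun i => key (f' i, f' (π' i))) ∘ σ = (fun i => key (f i, f (π i))) := by
      funext i
      have := congrFun hσ i
      simp only [Function.comp] at this ⊢
      rw [this]
    have e2 := Tuple.unique_monotone (f := fun i => key (f' i, f' (π' i))) (σ := σ) (τ := 1) (by rw [e1]; exact m1) (by simpa using m2)
    rw [e1] at e2
    funext i
    exact hk (congrFun e2 i)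
  have hf : f = f' := by funext i; exact (Prod.mk.inj (congrFun hpair i)).1
  subst hf
  have hg : ∀ i, f (π i) = f (π' i) := fun i => (Prod.mk.inj (congrFun hpair i)).2
  refine ⟨?_, rfl⟩
  have hlt : ∀ i j, π i < π j → π' i < π' j := by
    intro i j hij
    have hne : π' i ≠ π' j := by
      intro h; rw [π'.injective h] at hij; exact lt_irrefl _ hij
    rcases (hc.1 hij.le).lt_or_eq with hl | he
    · rw [hg, hg] at hl
      by_contra hcon
      exact absurd (hc.1 (not_lt.1 hcon)) (not_le.2 hl)
    · obtain ⟨q1, q2⟩ := hc.2 _ _ hij he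
      rw [invol_apply hπ, invol_apply hπ] at q1 q2
      by_contra hcon
      have hlt' : π' j < π' i := lt_of_le_of_ne (not_lt.1 hcon) hne.symm
      have he' : f (π' j) = f (π' i) := by rw [← hg, ← hg, he]
      obtain ⟨r1, r2⟩ := hc'.2 _ _ hlt' he'
      rw [invol_apply hπ', invol_apply hπ', ← hg j, ← he] at r1 r2
      by_cases hp : (f (π i)).val % 2 = 0
      · exact absurd (q1 hp) (not_lt_of_gt (r1 hp))
      · exact absurd (q2 (by omega)) (not_lt_of_gt (r2 (by omega)))
  have hs : StrictMono (π' * π⁻¹ : Equiv.Perm (Fin n)) := by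
    intro i j hij
    apply hlt
    simpa using hij
  have := Tuple.unique_monotone (f := (id : Fin n → Fin n)) (σ := (π' * π⁻¹ : Equiv.Perm (Fin n))) (τ := 1) hs.monotone (by simpa using monotone_id)
  have h1 : π' * π⁻¹ = 1 := by
    ext i; exact congrArg Fin.val (congrFun this i)
  exact (mul_inv_eq_one.1 h1).symm

lemma sort_exists {T : Type*} [Fintype T] (n : ℕ) (hn : Fintype.card T = n) (k1 : T → ℕ) (k2 : T → ℤ) (k3 : T → ℕ)
    (hinj : ∀ x y, k1 x = k1 y → k2 x = k2 y → k3 x = k3 y → x = y) :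
    ∃ e : Fin n ≃ T, ∀ i j, i < j → (k1 (e i) < k1 (e j) ∨ (k1 (e i) = k1 (e j) ∧
      (k2 (e i) < k2 (e j) ∨ (k2 (e i) = k2 (e j) ∧ k3 (e i) < k3 (e j))))) := by
  let key : T → ℕ ×ₗ (ℤ ×ₗ ℕ) := fun x => toLex (k1 x, toLex (k2 x, k3 x))
  have hk : Function.Injective key := by
    intro x y h
    have h1 := toLex.injective h
    rw [Prod.mk.injEq] at h1
    have h2 := toLex.injective h1.2
    rw [Prod.mk.injEq] at h2
    exact hinj x y h1.1 h2.1 h2.2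
  let _ : LinearOrder T := LinearOrder.lift' key hk
  let e := Fintype.orderIsoFinOfCardEq T hn
  refine ⟨e.toEquiv, fun i j hij => ?_⟩
  have h1 : e i < e j := e.lt_iff_lt.2 hij
  have h2 : key (e i) < key (e j) := h1
  simp only [key, Prod.Lex.toLex_lt_toLex] at h2
  exact h2

abbrev TB {N : ℕ} (A : Sym2 (Fin N) → ℕ) := Σ p : Fin N × Fin N, Fin (A s(p.1, p.2))

lemma TB_ext {N : ℕ} {A : Sym2 (Fin N) → ℕ} (x y : TB A) (h1 : x.1.1 = y.1.1) (h2 : x.1.2 = y.1.2)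
    (h3 : x.2.val = y.2.val) : x = y := by
  obtain ⟨⟨a, b⟩, c⟩ := x
  obtain ⟨⟨a', b'⟩, c'⟩ := y
  dsimp only at h1 h2 h3
  subst h1 h2
  have : c = c' := Fin.ext h3
  subst this; rfl

def tauB {N : ℕ} (A : Sym2 (Fin N) → ℕ) (x : TB A) : TB A :=
  ⟨(x.1.2, x.1.1), ⟨if x.1.1.val % 2 = 1 ∧ x.1.2.val % 2 = 1 then A s(x.1.1, x.1.2) - 1 - x.2.val else x.2.val, by
    have h := x.2.isLt
    have h2 : A s(x.1.2, x.1.1) = A s(x.1.1, x.1.2) := by rw [Sym2.eq_swap]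
    show _ < A s(x.1.2, x.1.1)
    split_ifs <;> omega⟩⟩

lemma tauB_tauB {N : ℕ} (A : Sym2 (Fin N) → ℕ) (x : TB A) : tauB A (tauB A x) = x := by
  apply TB_ext
  · rfl
  · rfl
  · have h := x.2.isLt
    have h2 : A s(x.1.2, x.1.1) = A s(x.1.1, x.1.2) := by rw [Sym2.eq_swap]
    simp only [tauB]
    split_ifs <;> omega

lemma count_TB0 {N : ℕ} (A : Sym2 (Fin N) → ℕ) (s : Sym2 (Fin N)) :
    (Finset.univ.filter fun x : TB A => s(x.1.1, x.1.2) = s).card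
      = ∑ p ∈ Finset.univ.filter (fun p : Fin N × Fin N => s(p.1, p.2) = s), A s(p.1, p.2) := by
  rw [Finset.card_filter, Fintype.sum_sigma, Finset.sum_filter]
  refine Finset.sum_congr rfl fun p _ => ?_
  dsimp only
  split_ifs <;> simp

lemma compat_TB {a bi bj ci cj Ai Aj : ℕ}
    (mi : a % 2 ≠ bi % 2 → Ai ≤ 1) (mj : a % 2 ≠ bj % 2 → Aj ≤ 1) (hi : ci < Ai) (hj : cj < Aj)
    (hAA : bi = bj → Ai = Aj)
    (h1 : a < a ∨ (a = a ∧ ((if a % 2 = 0 then (bi : ℤ) else -(bi : ℤ)) < (if a % 2 = 0 then (bj : ℤ) else -(bj : ℤ)) ∨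
      ((if a % 2 = 0 then (bi : ℤ) else -(bi : ℤ)) = (if a % 2 = 0 then (bj : ℤ) else -(bj : ℤ)) ∧ ci < cj)))) :
    (a % 2 = 0 → ¬ (bj < bi ∨ (bj = bi ∧ ((if bj % 2 = 0 then (a : ℤ) else -(a : ℤ)) < (if bi % 2 = 0 then (a : ℤ) else -(a : ℤ)) ∨
      ((if bj % 2 = 0 then (a : ℤ) else -(a : ℤ)) = (if bi % 2 = 0 then (a : ℤ) else -(a : ℤ)) ∧
       (if a % 2 = 1 ∧ bj % 2 = 1 then Aj - 1 - cj else cj) < (if a % 2 = 1 ∧ bi % 2 = 1 then Ai - 1 - ci else ci)))))) ∧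
    (a % 2 = 1 → ¬ (bi < bj ∨ (bi = bj ∧ ((if bi % 2 = 0 then (a : ℤ) else -(a : ℤ)) < (if bj % 2 = 0 then (a : ℤ) else -(a : ℤ)) ∨
      ((if bi % 2 = 0 then (a : ℤ) else -(a : ℤ)) = (if bj % 2 = 0 then (a : ℤ) else -(a : ℤ)) ∧
       (if a % 2 = 1 ∧ bi % 2 = 1 then Ai - 1 - ci else ci) < (if a % 2 = 1 ∧ bj % 2 = 1 then Aj - 1 - cj else cj)))))) := by
  constructor
  · intro hp
    simp only [hp, if_true] at h1
    rintro (h | ⟨h, h3⟩)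
    · omega
    · subst h
      simp [hp] at h3 h1
      omega
  · intro hp
    simp only [hp] at h1
    rintro (h | ⟨h, h3⟩)
    · norm_num at h1; omega
    · subst h
      have := hAA rfl
      subst this
      by_cases hb : bi % 2 = 1
      · simp [hp, hb] at h3 h1
        omega
      · have := mi (by omega)
        have : ci = cj := by omega
        subst this
        simp at h3

lemma count_TB {N : ℕ} (d : Sym2 (Fin N) → ℕ) (hd : ∀ s, admS s (d s)) (s : Sym2 (Fin N)) :
    (Finset.univ.filter fun x : TB (fun s => if s.IsDiag then d s else d s / 2) =>
      s(x.1.1, x.1.2) = s).card = d s := by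
  set A : Sym2 (Fin N) → ℕ := (fun s => if s.IsDiag then d s else d s / 2) with hA
  rw [count_TB0]
  have hs := hd s
  induction s using Sym2.ind with
  | _ a b =>
    by_cases h : a = b
    · subst h
      have : (Finset.univ.filter fun p : Fin N × Fin N => s(p.1, p.2) = s(a, a)) = {(a, a)} := by
        ext ⟨x, y⟩; simp
      rw [this]; simp [hA]
    · have : (Finset.univ.filter fun p : Fin N × Fin N => s(p.1, p.2) = s(a, b)) = {(a, b), (b, a)} := by
        ext ⟨x, y⟩; simp
      rw [this, Finset.sum_pair (by simp [h])]
      simp [admS, h] at hs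
      rw [Sym2.eq_swap (a := b)]
      simp [hA, h]
      omega

lemma pair_surj {n N : ℕ} (d : Sym2 (Fin N) → ℕ) (hd : ∀ s, admS s (d s)) (hsum : ∑ s, d s = n) :
    ∃ (π : Equiv.Perm (Fin n)) (f : Fin n → Fin N), π ^ 2 = 1 ∧ compatB π f ∧ ∀ s, dB π f s = d s := by
  have hcount := count_TB d hd
  set A : Sym2 (Fin N) → ℕ := (fun s => if s.IsDiag then d s else d s / 2) with hA
  have hmix : ∀ a b : Fin N, a.val % 2 ≠ b.val % 2 → A s(a,b) ≤ 1 := by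
    intro a b hab
    have hne : a ≠ b := by rintro rfl; exact hab rfl
    have := hd s(a,b)
    simp only [admS, Sym2.mk_isDiag_iff, hne, if_false, mixedS_iff] at this
    have := this.2 hab
    simp only [hA, Sym2.mk_isDiag_iff, hne, if_false]
    omega
  have hcard : Fintype.card (TB A) = n := by
    have := Finset.card_eq_sum_card_fiberwise (s := (Finset.univ : Finset (TB A))) (t := Finset.univ)
      (f := fun x => s(x.1.1, x.1.2)) (fun _ _ => by simp)
    rw [← Finset.card_univ, this, ← hsum]
    exact Finset.sum_congr rfl (fun s _ => hcount s)
  obtain ⟨e, he⟩ := sort_exists n hcard (fun x => x.1.1.val)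
    (fun x => if x.1.1.val % 2 = 0 then (x.1.2.val : ℤ) else - (x.1.2.val : ℤ)) (fun x => x.2.val) (by
      intro x y h1 h2 h3
      rw [h1] at h2
      apply TB_ext
      · exact Fin.ext h1
      · apply Fin.ext; split_ifs at h2 <;> omega
      · exact h3)
  let τ : Equiv.Perm (TB A) := ⟨tauB A, tauB A, tauB_tauB A, tauB_tauB A⟩
  let π : Equiv.Perm (Fin n) := e.trans (τ.trans e.symm)
  have hπ : ∀ i, e (π i) = tauB A (e i) := by intro i; simp [π, τ]
  refine ⟨π, fun i => (e i).1.1, ?_, ⟨?_, ?_⟩, ?_⟩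
  · ext i
    rw [pow_two, Equiv.Perm.mul_apply]
    have : e (π (π i)) = e i := by rw [hπ, hπ, tauB_tauB]
    rw [e.injective this]; rfl
  · intro i j hij
    rcases hij.eq_or_lt with rfl | hlt
    · exact le_rfl
    · have := he i j hlt
      show (e i).1.1 ≤ (e j).1.1
      rw [Fin.le_def]
      omega
  · intro i j hij hf
    change (e i).1.1 = (e j).1.1 at hf
    show (((e i).1.1.val % 2 = 0 → π i < π j) ∧ ((e i).1.1.val % 2 = 1 → π j < π i))
    have h1 := he i j hij
    have hne : π i ≠ π j := fun h => (ne_of_lt hij) (π.injective h)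
    have h2 := he (π i) (π j)
    have h3 := he (π j) (π i)
    rw [hπ, hπ] at h2 h3
    have lti := (e i).2.isLt
    have ltj := (e j).2.isLt
    have mi := hmix (e i).1.1 (e i).1.2
    have mj := hmix (e j).1.1 (e j).1.2
    have hAA : (e i).1.2.val = (e j).1.2.val → A s((e i).1.1, (e i).1.2) = A s((e j).1.1, (e j).1.2) := by
      intro h; rw [hf, Fin.ext h]
    simp only [tauB] at h1 h2 h3
    have hfv : (e j).1.1.val = (e i).1.1.val := congrArg Fin.val hf.symm
    rw [hfv] at h1 h2 h3 mj
    obtain ⟨c1, c2⟩ := compat_TB mi mj lti ltj hAA h1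
    constructor
    · intro hp
      rcases lt_or_gt_of_ne hne with h | h
      · exact h
      · exact absurd (h3 h) (c1 hp)
    · intro hp
      rcases lt_or_gt_of_ne hne with h | h
      · exact absurd (h2 h) (c2 hp)
      · exact h
  · intro s
    rw [← hcount s]
    unfold dB
    apply Finset.card_equiv e
    intro i
    simp only [Finset.mem_filter, Finset.mem_univ, true_and, hπ, tauB]

lemma coeff_count (n N : ℕ) : PowerSeries.coeff n (∏ s : Sym2 (Fin N), FS s) =
    ((Finset.univ.filter fun p : Equiv.Perm (Fin n) × (Fin n → Fin N) => p.1 ^ 2 = 1 ∧ compatB p.1 p.2).card : ℚ) := by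
  rw [PowerSeries.coeff_prod]
  have h1 : ∀ l : Sym2 (Fin N) →₀ ℕ, ∏ s : Sym2 (Fin N), PowerSeries.coeff (l s) (FS s) = if ∀ s, admS s (l s) then 1 else 0 := by
    intro l
    simp only [FS, PowerSeries.coeff_mk]
    rw [Finset.prod_ite_zero]; simp
  rw [Finset.sum_congr rfl (fun l _ => h1 l), Finset.sum_boole]
  congr 1
  symm
  apply Finset.card_bij (fun p _ => Finsupp.equivFunOnFinite.symm (dB p.1 p.2))
  · rintro ⟨π, f⟩ h
    simp only [Finset.mem_filter, Finset.mem_univ, true_and, Finset.mem_finsuppAntidiag] at h ⊢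
    refine ⟨⟨?_, by simp⟩, fun s => ?_⟩
    · simpa using dB_sum π f
    · exact dB_adm h.1 h.2 s
  · rintro ⟨π, f⟩ h ⟨π', f'⟩ h' heq
    simp only [Finset.mem_filter, Finset.mem_univ, true_and] at h h'
    have := Finsupp.equivFunOnFinite.symm.injective heq
    obtain ⟨e1, e2⟩ := pair_inj h.1 h'.1 h.2 h'.2 (fun s => congrFun this s)
    rw [e1, e2]
  · intro l hl
    simp only [Finset.mem_filter, Finset.mem_finsuppAntidiag] at hl
    obtain ⟨π, f, h1, h2, h3⟩ := pair_surj (n := n) l hl.2 (by simpa using hl.1.1)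
    refine ⟨(π, f), by simp [h1, h2], ?_⟩
    ext s; exact h3 s

lemma bC_zero (w : ℕ → ℚ) : bC w 0 = 1 := by
  have : PS 0 = {0} := by
    ext s
    rw [mem_PS, Finset.mem_singleton]
    constructor
    · rintro ⟨h1, h2⟩
      rw [Multiset.eq_zero_iff_forall_notMem]
      intro a ha
      have := Multiset.le_sum_of_mem ha
      have := h2 a ha
      omega
    · rintro rfl; simp
  simp [bC, this, zC]

lemma coeff_eq_bC (k n : ℕ) : PowerSeries.coeff n (∏ s : Sym2 (Fin (2*k+1)), FS s)
    = bC (fun m => (2*k+1 : ℚ)^gC m) n := by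
  induction n using Nat.strong_induction_on with
  | _ n ih =>
    rcases Nat.eq_zero_or_pos n with rfl | hn
    · rw [bC_zero, coeff_zero_FS]
    · have h1 := coeff_rec k n
      have h2 := bC_rec (fun m => (2*k+1 : ℚ)^gC m) n
      have h3 : (n : ℚ) ≠ 0 := by positivity
      apply mul_left_cancel₀ h3
      rw [h1, h2]
      apply Finset.sum_congr rfl
      intro m hm
      rw [Finset.mem_Icc] at hm
      rw [ih (n - m) (by omega)]

lemma numOdd_le (n : ℕ) (σ : Equiv.Perm (Fin n)) : numOddCycles n σ ≤ n := by
  unfold numOddCycles fullCycleType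
  refine (Multiset.card_le_card (Multiset.filter_le _ _)).trans ?_
  have h : ∀ s : Multiset ℕ, (∀ i ∈ s, 0 < i) → Multiset.card s ≤ s.sum := by
    intro s
    induction s using Multiset.induction_on with
    | empty => simp
    | cons a s ih =>
      intro h
      have := ih (fun i hi => h i (by simp [hi]))
      have := h a (by simp)
      simp; omega
  refine (h _ (fct_pos σ)).trans ?_
  have := Finset.card_le_univ σ.support
  simp [Equiv.Perm.sum_cycleType] at this ⊢
  omega

lemma dnk_sum (n : ℕ) (y : ℚ) : ∑ k ∈ Finset.range (n+1), (dnk n k : ℚ) * y ^ k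
    = ∑ σ : Equiv.Perm (Fin n), y ^ numOddCycles n (σ ^ 2) := by
  rw [← Finset.sum_fiberwise_of_maps_to (s := Finset.univ) (t := Finset.range (n+1))
    (g := fun σ : Equiv.Perm (Fin n) => numOddCycles n (σ ^ 2))
    (fun σ _ => by have := numOdd_le n (σ^2); simp; omega)]
  apply Finset.sum_congr rfl
  intro k _
  rw [Finset.sum_congr rfl (g := fun _ => y ^ k)]
  · simp [dnk]
  · intro σ hσ
    rw [(Finset.mem_filter.1 hσ).2]

lemma perm_side (n k : ℕ) : ∑ σ : Equiv.Perm (Fin n), (2*k+1 : ℚ) ^ numOddCycles n (σ ^ 2)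
    = n.factorial * bC (fun m => (2*k+1 : ℚ)^gC m) n := by
  rw [← perm_sum]
  apply Finset.sum_congr rfl
  intro σ _
  unfold numOddCycles fullCycleType
  rw [← pow_odd_sq]

def DD (n : ℕ) (π : Equiv.Perm (Fin n)) (i : ℕ) : Prop := oneLine n π (i+2) < oneLine n π (i+1)
def UU (n : ℕ) (π : Equiv.Perm (Fin n)) (i : ℕ) : Prop := oneLine n π i < oneLine n π (i+1)

lemma DD_iff (m : ℕ) (π : Equiv.Perm (Fin (m+1))) (i : Fin m) :
    DD (m+1) π i ↔ π i.succ < π i.castSucc := by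
  have hi := i.isLt
  unfold DD oneLine
  rw [dif_pos ⟨by omega, by omega⟩, dif_pos ⟨by omega, by omega⟩, Fin.lt_def]
  have e1 : (⟨(i:ℕ) + 2 - 1, by omega⟩ : Fin (m+1)) = i.succ := by ext; simp
  have e2 : (⟨(i:ℕ) + 1 - 1, by omega⟩ : Fin (m+1)) = i.castSucc := by ext; simp
  rw [e1, e2]; omega

lemma compat_iff (m N : ℕ) (π : Equiv.Perm (Fin (m+1))) (f : Fin (m+1) → Fin N) :
    compatB π f ↔ ∀ i : Fin m, okStep (DD (m+1) π i) (f i.castSucc) (f i.succ) := by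
  constructor
  · rintro ⟨h1, h2⟩ i
    have hlt : i.castSucc < i.succ := Fin.castSucc_lt_succ
    unfold okStep
    rw [DD_iff]
    rcases (h1 hlt.le).lt_or_eq with h | h
    · exact Or.inl h
    · right
      obtain ⟨q1, q2⟩ := h2 _ _ hlt h
      refine ⟨congrArg Fin.val h, ?_⟩
      rw [← h]
      constructor
      · intro hp; exact not_lt_of_gt (q1 hp)
      · intro hp; by_contra hc; exact hp (q2 (by omega))
  · intro h
    have hm : Monotone f := by
      rw [Fin.monotone_iff_le_succ]
      intro i
      rcases h i with h | h
      · exact le_of_lt h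
      · exact le_of_eq (Fin.ext h.1)
    refine ⟨hm, ?_⟩
    have key : ∀ j : Fin (m+1), ∀ i, i < j → f i = f j →
        (((f i).val % 2 = 0 → π i < π j) ∧ ((f i).val % 2 = 1 → π j < π i)) := by
      intro j
      induction j using Fin.induction with
      | zero => intro i hi; exact absurd hi (Fin.not_lt_zero i)
      | succ j ih =>
        intro i hi hf
        have hij : i ≤ j.castSucc := Fin.le_castSucc_iff.2 hi
        have e1 : f i = f j.castSucc := le_antisymm (hm hij) (by rw [hf]; exact hm Fin.castSucc_lt_succ.le)
        have e2 : f j.castSucc = f j.succ := by rw [← e1, hf]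
        have hs : ((f i).val % 2 = 0 → π j.castSucc < π j.succ) ∧ ((f i).val % 2 = 1 → π j.succ < π j.castSucc) := by
          have hne : π j.castSucc ≠ π j.succ := fun h => (Fin.castSucc_lt_succ (i := j)).ne (π.injective h)
          rcases h j with h | h
          · rw [e2] at h; exact absurd h (lt_irrefl _)
          · have h2 := h.2
            rw [DD_iff, ← hf] at h2
            constructor
            · intro hp
              exact lt_of_le_of_ne (not_lt.1 (h2.1 hp)) hne
            · intro hp
              by_contra hc
              have := h2.2 hc
              omega
        rcases hij.lt_or_eq with hl | he
        · obtain ⟨q1, q2⟩ := ih i hl e1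
          exact ⟨fun hp => (q1 hp).trans (hs.1 hp), fun hp => (hs.2 hp).trans (q2 hp)⟩
        · subst he; exact hs
    intro i j; exact key j i

lemma lpk_eq (m : ℕ) (π : Equiv.Perm (Fin (m+1))) :
    lpk (m+1) π = ((Finset.range m).filter fun i => DD (m+1) π i ∧ UU (m+1) π i).card := by
  unfold lpk
  symm
  apply Finset.card_bij (fun i _ => i + 1)
  · intro i hi
    rw [Finset.mem_filter, Finset.mem_range] at hi
    rw [Finset.mem_filter, Finset.mem_Icc]
    exact ⟨by omega, hi.2.2, hi.2.1⟩
  · intro i _ j _ h; omega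
  · intro i hi
    simp only [Finset.mem_filter, Finset.mem_Icc] at hi
    obtain ⟨i, rfl⟩ : ∃ j, i = j + 1 := ⟨i - 1, by omega⟩
    refine ⟨i, ?_, rfl⟩
    rw [Finset.mem_filter, Finset.mem_range]
    exact ⟨by omega, hi.2.2, hi.2.1⟩

lemma lpk_gf (m : ℕ) (π : Equiv.Perm (Fin (m+1))) :
    (1 - PowerSeries.X)^(m+2) * (PowerSeries.mk fun j => (Cc (DD (m+1) π) m (2*j+1) : ℚ))
     = 4^(lpk (m+1) π) * PowerSeries.X^(lpk (m+1) π) * (1 + PowerSeries.X)^(m + 1 - 2 * lpk (m+1) π) := by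
  rw [lpk_eq]
  apply gf_final (DD (m+1) π) (UU (m+1) π) m
  · simp [UU, oneLine]
  · intro i hi
    have hne : oneLine (m+1) π (i+2) ≠ oneLine (m+1) π (i+1) := by
      unfold oneLine
      rw [dif_pos ⟨by omega, by omega⟩, dif_pos ⟨by omega, by omega⟩]
      intro h
      have := π.injective (Fin.ext (Nat.succ.inj h))
      rw [Fin.mk.injEq] at this
      omega
    simp only [UU, DD, add_assoc, Nat.reduceAdd]
    omega

lemma inv_side (m k : ℕ) : ∑ π ∈ invSet (m+1), (Cc (DD (m+1) π) m (2*k+1) : ℚ)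
    = PowerSeries.coeff (m+1) (∏ s : Sym2 (Fin (2*k+1)), FS s) := by
  rw [coeff_count, ← Nat.cast_sum]
  congr 1
  rw [Finset.card_filter, Fintype.sum_prod_type, invSet, Finset.sum_filter]
  apply Finset.sum_congr rfl
  intro π _
  rw [← count_total]
  split_ifs with h
  · rw [Finset.card_filter]
    apply Finset.sum_congr rfl
    intro f _
    simp only [h, true_and, compat_iff]
  · simp [h]

theorem stmt14 (n : ℕ) (hn : 1 ≤ n) (B : ℕ → Polynomial ℚ)
    (hB : ∀ m : ℕ, ((B m : PowerSeries ℚ))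
      = (1 - PowerSeries.X) ^ (m + 1)
          * PowerSeries.mk (fun k => ((2 * k + 1 : ℕ) : ℚ) ^ m)) :
    (n.factorial : Polynomial ℚ)
        * ∑ π ∈ invSet n,
            (4 : Polynomial ℚ) ^ lpk n π * Polynomial.X ^ lpk n π
              * (1 + Polynomial.X) ^ (n - 2 * lpk n π)
      = ∑ k ∈ Finset.range (n + 1),
          (dnk n k : Polynomial ℚ) * B k * (1 - Polynomial.X) ^ (n - k) := by
  obtain ⟨m, rfl⟩ : ∃ m, n = m + 1 := ⟨n - 1, by omega⟩
  apply Polynomial.coe_injective ℚ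
  have hc4 : ((4 : Polynomial ℚ) : PowerSeries ℚ) = 4 := by
    have := map_ofNat (Polynomial.coeToPowerSeries.ringHom (R := ℚ)) 4
    simpa using this
  have hL : (((((m+1).factorial : Polynomial ℚ)
        * ∑ π ∈ invSet (m+1),
            (4 : Polynomial ℚ) ^ lpk (m+1) π * Polynomial.X ^ lpk (m+1) π
              * (1 + Polynomial.X) ^ (m + 1 - 2 * lpk (m+1) π)) : Polynomial ℚ) : PowerSeries ℚ)
      = (1 - PowerSeries.X)^(m+2) * PowerSeries.mk (fun k => ((m+1).factorial : ℚ) *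
        ∑ π ∈ invSet (m+1), (Cc (DD (m+1) π) m (2*k+1) : ℚ)) := by
    rw [← Polynomial.coeToPowerSeries.ringHom_apply, map_mul, map_sum, map_natCast]
    simp only [map_mul, map_pow, map_add, map_one, Polynomial.coeToPowerSeries.ringHom_apply,
      Polynomial.coe_X, hc4]
    rw [Finset.sum_congr rfl (fun π _ => (lpk_gf m π).symm), ← Finset.mul_sum, mul_left_comm]
    congr 1
    ext k
    rw [← map_natCast (PowerSeries.C (R := ℚ)), PowerSeries.coeff_C_mul, map_sum]
    simp only [PowerSeries.coeff_mk]
  have hR : (((∑ k ∈ Finset.range (m + 1 + 1),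
          (dnk (m+1) k : Polynomial ℚ) * B k * (1 - Polynomial.X) ^ (m + 1 - k)) : Polynomial ℚ) : PowerSeries ℚ)
      = (1 - PowerSeries.X)^(m+2) * PowerSeries.mk (fun k =>
        ∑ j ∈ Finset.range (m + 1 + 1), (dnk (m+1) j : ℚ) * (2*k+1 : ℚ)^j) := by
    rw [← Polynomial.coeToPowerSeries.ringHom_apply, map_sum]
    have : PowerSeries.mk (fun k : ℕ => ∑ j ∈ Finset.range (m + 1 + 1), (dnk (m+1) j : ℚ) * (2*k+1 : ℚ)^j)
        = ∑ j ∈ Finset.range (m + 1 + 1), (dnk (m+1) j : PowerSeries ℚ) * PowerSeries.mk (fun k => ((2 * k + 1 : ℕ) : ℚ) ^ j) := by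
      ext k
      rw [map_sum, PowerSeries.coeff_mk]
      apply Finset.sum_congr rfl
      intro j _
      rw [← map_natCast (PowerSeries.C (R := ℚ)), PowerSeries.coeff_C_mul, PowerSeries.coeff_mk]
      push_cast; rfl
    rw [this, Finset.mul_sum]
    apply Finset.sum_congr rfl
    intro j hj
    rw [Finset.mem_range] at hj
    simp only [map_mul, map_pow, map_sub, map_one, map_natCast, Polynomial.coeToPowerSeries.ringHom_apply,
      Polynomial.coe_X, hB]
    have e : m + 2 = (j + 1) + (m + 1 - j) := by omega
    rw [e, pow_add]
    ring
  rw [hL, hR]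
  congr 1
  ext k
  rw [PowerSeries.coeff_mk, PowerSeries.coeff_mk, inv_side, coeff_eq_bC, dnk_sum, perm_side]

end
end

section
/- Let n ≥ 1. Then the following identity of polynomials in ℚ[t] holds: n! · Σ_{π ∈ 𝔦_n} t^{lpk(π)} = Σ_{k=0, k ≡ n (mod 2)}^{n} d_{n,k} (1−t)^{(n−k)/2} P_k^{lpk}(t), where P_m^{lpk}(t) = Σ_{π ∈ S_m} t^{lpk(π)} and d_{n,k} is the number of permutations π of [n] such that π² has exactly k odd cycles (cycles of odd length, counting fixed points as cycles of length 1). (Moreover d_{n,k} = 0 unless k ≡ n (mod 2), so the exponents (n−k)/2 appearing are nonnegative integers.) -/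
open scoped Classical

noncomputable section

def ky (a : ℕ) (x : ℤ) : ℤ ×ₗ ℤ := toLex ((a : ℤ), (-1) ^ a * x)

lemma ky_lt (a b : ℕ) (x y : ℤ) :
    ky a x < ky b y ↔ a < b ∨ a = b ∧ (-1) ^ a * x < (-1) ^ a * y := by
  unfold ky
  rw [Prod.Lex.toLex_lt_toLex]
  simp only [Nat.cast_lt, Nat.cast_inj]
  constructor
  · rintro (h | ⟨h, h'⟩)
    · exact Or.inl h
    · subst h; exact Or.inr ⟨rfl, h'⟩
  · rintro (h | ⟨h, h'⟩)
    · exact Or.inl h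
    · subst h; exact Or.inr ⟨rfl, h'⟩

lemma ky_inj (a b : ℕ) (x y : ℤ) (h : ky a x = ky b y) : a = b ∧ x = y := by
  unfold ky at h
  have h1 := congrArg ofLex h
  simp only [ofLex_toLex, Prod.mk.injEq, Nat.cast_inj] at h1
  obtain ⟨rfl, h2⟩ := h1
  refine ⟨rfl, ?_⟩
  exact mul_left_cancel₀ (pow_ne_zero _ (by norm_num)) h2

def cc (p : ℕ → ℤ) : ℕ → ℕ → ℕ
  | 0, _ => 1
  | m + 1, v => ∑ u ∈ Finset.range v, cc p m u +
      if (-1) ^ v * p m < (-1) ^ v * p (m + 1) then cc p m v else 0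

lemma strictMono_snoc_iff {α : Type*} [Preorder α] (m : ℕ) (g : Fin (m + 2) → α) :
    StrictMono g ↔ StrictMono (fun i : Fin (m + 1) => g i.castSucc) ∧
      g (Fin.last m).castSucc < g (Fin.last (m + 1)) := by
  rw [Fin.strictMono_iff_lt_succ, Fin.strictMono_iff_lt_succ]
  constructor
  · intro h
    refine ⟨fun i => ?_, ?_⟩
    · have := h i.castSucc
      simpa using this
    · have := h (Fin.last m)
      simpa using this
  · rintro ⟨h1, h2⟩ i
    refine Fin.lastCases ?_ (fun j => ?_) i
    · simpa using h2
    · have := h1 j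
      simpa using this

lemma card_cc (p : ℕ → ℤ) (K m v : ℕ) (hv : v < K) :
    (Finset.univ.filter fun f : Fin (m + 1) → Fin K =>
      StrictMono (fun i => ky (f i) (p i)) ∧ (f (Fin.last m) : ℕ) = v).card = cc p m v := by
  induction m generalizing v with
  | zero =>
    rw [cc, Finset.card_eq_one]
    refine ⟨fun _ => ⟨v, hv⟩, ?_⟩
    ext f
    simp only [Finset.mem_filter, Finset.mem_univ, true_and, Finset.mem_singleton]
    constructor
    · rintro ⟨-, h⟩
      funext i
      have : i = Fin.last 0 := by
        apply Fin.ext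
        simp only [Fin.val_last]; omega
      subst this
      exact Fin.ext h
    · rintro rfl
      refine ⟨fun i j hij => ?_, rfl⟩
      have : (i : ℕ) < j := hij
      omega
  | succ m ih =>
    have e1 : (Finset.univ.filter fun f : Fin (m + 1 + 1) → Fin K =>
      StrictMono (fun i => ky (f i) (p i)) ∧ (f (Fin.last (m + 1)) : ℕ) = v).card =
      (Finset.univ.filter fun f : Fin (m + 1) → Fin K =>
      StrictMono (fun i => ky (f i) (p i)) ∧
        ky (f (Fin.last m)) (p m) < ky v (p (m + 1))).card := by
      refine Finset.card_nbij' (fun f => Fin.init f)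
        (fun f => (Fin.snoc f ⟨v, hv⟩ : Fin (m + 1 + 1) → Fin K)) ?_ ?_ ?_ ?_
      · intro f hf
        simp only [Finset.coe_filter, Finset.mem_univ, true_and, Set.mem_ofPred_eq] at hf ⊢
        obtain ⟨h1, h2⟩ := hf
        rw [strictMono_snoc_iff] at h1
        simpa [Fin.init, h2] using h1
      · intro f hf
        simp only [Finset.coe_filter, Finset.mem_univ, true_and, Set.mem_ofPred_eq] at hf ⊢
        rw [strictMono_snoc_iff]
        simpa using hf
      · intro f hf
        simp only [Finset.coe_filter, Finset.mem_univ, true_and, Set.mem_ofPred_eq] at hf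
        have : (⟨v, hv⟩ : Fin K) = f (Fin.last (m + 1)) := Fin.ext hf.2.symm
        simp only [this, Fin.snoc_init_self]
      · intro f hf
        simp
    rw [e1, cc]
    rw [Finset.card_eq_sum_card_fiberwise (f := fun f => ((f (Fin.last m) : Fin K) : ℕ))
      (t := Finset.range (v + 1))]
    · rw [Finset.sum_range_succ]
      congr 1
      · refine Finset.sum_congr rfl fun u hu => ?_
        rw [Finset.mem_range] at hu
        rw [← ih u (hu.trans hv), Finset.filter_filter]
        congr 1
        ext f
        simp only [Finset.mem_filter, Finset.mem_univ, true_and]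
        constructor
        · rintro ⟨⟨h1, h2⟩, h3⟩; exact ⟨h1, h3⟩
        · rintro ⟨h1, h3⟩
          refine ⟨⟨h1, ?_⟩, h3⟩
          rw [ky_lt]; left; omega
      · rw [Finset.filter_filter]
        split_ifs with hc
        · rw [← ih v hv]
          congr 1
          ext f
          simp only [Finset.mem_filter, Finset.mem_univ, true_and]
          constructor
          · rintro ⟨⟨h1, h2⟩, h3⟩; exact ⟨h1, h3⟩
          · rintro ⟨h1, h3⟩
            refine ⟨⟨h1, ?_⟩, h3⟩
            rw [ky_lt, h3]; right; exact ⟨rfl, hc⟩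
        · rw [Finset.card_eq_zero, Finset.filter_eq_empty_iff]
          rintro f - ⟨⟨h1, h2⟩, h3⟩
          rw [ky_lt, h3] at h2
          rcases h2 with h2 | h2
          · omega
          · exact hc h2.2
    · intro f hf
      simp only [Finset.coe_filter, Finset.mem_univ, true_and, Set.mem_ofPred_eq] at hf
      have := hf.2
      rw [ky_lt] at this
      simp only [Finset.coe_range, Set.mem_Iio]
      omega

lemma card_cc_total (p : ℕ → ℤ) (K m : ℕ) :
    (Finset.univ.filter fun f : Fin (m + 1) → Fin K =>
      StrictMono (fun i => ky (f i) (p i))).card = ∑ v ∈ Finset.range K, cc p m v := by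
  rw [Finset.card_eq_sum_card_fiberwise (f := fun f => ((f (Fin.last m) : Fin K) : ℕ))
      (t := Finset.range K)]
  · refine Finset.sum_congr rfl fun u hu => ?_
    rw [Finset.mem_range] at hu
    rw [← card_cc p K m u hu, Finset.filter_filter]
  · intro f hf
    simp

open PowerSeries in
def uu : PowerSeries ℚ := 4 * X * ((1 + X : PowerSeries ℚ)⁻¹) ^ 2

open PowerSeries in
lemma one_add_X_inv : (1 + X : PowerSeries ℚ) * (1 + X : PowerSeries ℚ)⁻¹ = 1 :=
  PowerSeries.mul_inv_cancel _ (by simp)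

open PowerSeries in
lemma uu_mul : uu * (1 + X) ^ 2 = 4 * X := by
  unfold uu
  have h := one_add_X_inv
  calc _ = 4 * X * ((1 + X : PowerSeries ℚ) * (1 + X : PowerSeries ℚ)⁻¹) ^ 2 := by ring
    _ = _ := by rw [h]; ring

def sU (c : ℕ → ℕ) : PowerSeries ℚ := PowerSeries.mk fun j => (c (2 * j) : ℚ)
def sV (c : ℕ → ℕ) : PowerSeries ℚ := PowerSeries.X * PowerSeries.mk fun j => (c (2 * j + 1) : ℚ)
def sT (c : ℕ → ℕ) : PowerSeries ℚ :=
  PowerSeries.mk fun j => ∑ u ∈ Finset.range (2 * j), (c u : ℚ)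

open PowerSeries in
lemma sT_eq (c : ℕ → ℕ) : (1 - X) * sT c = X * sU c + sV c := by
  ext j
  unfold sT sU sV
  rw [sub_mul, one_mul, map_sub, map_add]
  cases j with
  | zero => simp
  | succ j =>
    simp only [coeff_succ_X_mul, coeff_mk]
    rw [show 2 * (j + 1) = 2 * j + 1 + 1 by ring, Finset.sum_range_succ, Finset.sum_range_succ]
    ring

open PowerSeries in
lemma sTot_eq (c : ℕ → ℕ) :
    (1 - X) * PowerSeries.mk (fun k => ((∑ u ∈ Finset.range (2 * k + 1), c u : ℕ) : ℚ))
      = sU c + sV c := by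
  have : PowerSeries.mk (fun k => ((∑ u ∈ Finset.range (2 * k + 1), c u : ℕ) : ℚ))
      = sT c + sU c := by
    ext j
    simp [sT, sU, Finset.sum_range_succ]
  rw [this, mul_add, sT_eq]; ring

lemma neg_one_pow_even (j : ℕ) : (-1 : ℤ) ^ (2 * j) = 1 := by
  rw [pow_mul]; norm_num

lemma neg_one_pow_odd (j : ℕ) : (-1 : ℤ) ^ (2 * j + 1) = -1 := by
  rw [pow_succ, pow_mul]; norm_num

open PowerSeries in
lemma step_asc (p : ℕ → ℤ) (m : ℕ) (h : p m < p (m + 1)) :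
    (1 - X) * sU (cc p (m + 1)) = sU (cc p m) + sV (cc p m) ∧
      sV (cc p (m + 1)) = X * sU (cc p (m + 1)) := by
  have hU : sU (cc p (m + 1)) = sT (cc p m) + sU (cc p m) := by
    ext j
    simp [sU, sT, cc, h]
  constructor
  · rw [hU, mul_add, sT_eq]; ring
  · rw [hU]; unfold sV; congr 1
    ext j
    simp [sU, sT, cc, neg_one_pow_odd, h.le, Finset.sum_range_succ]

open PowerSeries in
lemma step_desc (p : ℕ → ℤ) (m : ℕ) (h : p (m + 1) < p m) :
    (1 - X) * sU (cc p (m + 1)) = X * sU (cc p m) + sV (cc p m) ∧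
      sV (cc p (m + 1)) = sU (cc p (m + 1)) := by
  have hU : sU (cc p (m + 1)) = sT (cc p m) := by
    ext j
    simp [sU, sT, cc, h.le]
  constructor
  · rw [hU, sT_eq]
  · have hV : sV (cc p (m + 1)) = X * (sT (cc p m) + sU (cc p m)) + sV (cc p m) := by
      unfold sV
      rw [← mul_add]
      congr 1
      ext j
      simp [sU, sT, cc, neg_one_pow_odd, h, Finset.sum_range_succ]
    rw [hV, hU]
    have := sT_eq (cc p m)
    linear_combination -this

/-- number of left peaks among the first positions; `q i` is the letter at position `i`. -/
def lpq (q : ℕ → ℤ) (m : ℕ) : ℕ :=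
  ((Finset.Icc 1 m).filter fun i => q (i - 1) < q i ∧ q (i + 1) < q i).card

lemma lpq_succ (q : ℕ → ℤ) (m : ℕ) : lpq q (m + 1) = lpq q m +
    if q m < q (m + 1) ∧ q (m + 2) < q (m + 1) then 1 else 0 := by
  unfold lpq
  rw [← Finset.insert_Icc_right_eq_Icc_add_one (by omega), Finset.filter_insert]
  simp only [Nat.add_sub_cancel]
  split_ifs with h
  · rw [Finset.card_insert_of_notMem (by simp)]
  · rfl

open PowerSeries in
lemma one_sub_X_mul_one : (1 - X : PowerSeries ℚ) * PowerSeries.mk (fun _ => (1 : ℚ)) = 1 := by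
  ext j
  rw [sub_mul, one_mul, map_sub]
  cases j with
  | zero => simp
  | succ j => simp [coeff_succ_X_mul, coeff_one]

open PowerSeries in
lemma state (q : ℕ → ℤ) (m : ℕ) (h0 : q 0 < q 1)
    (hne : ∀ i, 1 ≤ i → i ≤ m → q i ≠ q (i + 1)) :
    (q m < q (m + 1) → (1 - X) ^ (m + 1) * sU (cc (fun i => q (i + 1)) m) = (1 + X) ^ m * uu ^ lpq q m ∧
        sV (cc (fun i => q (i + 1)) m) = X * sU (cc (fun i => q (i + 1)) m)) ∧
    (q (m + 1) < q m →
      2 * (1 - X) ^ (m + 1) * sU (cc (fun i => q (i + 1)) m) = (1 + X) ^ (m + 1) * uu ^ lpq q m ∧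
        sV (cc (fun i => q (i + 1)) m) = sU (cc (fun i => q (i + 1)) m)) := by
  induction m with
  | zero =>
    constructor
    · intro _
      have : sU (cc (fun i => q (i + 1)) 0) = PowerSeries.mk (fun _ => (1 : ℚ)) := by
        ext j; simp [sU, cc]
      constructor
      · rw [this]
        simp [lpq, one_sub_X_mul_one]
      · rw [this]; unfold sV
        congr 1
    · intro h
      exact absurd h0 (not_lt.mpr (le_of_lt h))
  | succ m ih =>
    have ih := ih (fun i h1 h2 => hne i h1 (by omega))
    have hm : q m < q (m + 1) ∨ q (m + 1) < q m := by
      rcases Nat.eq_zero_or_pos m with rfl | hm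
      · left; exact h0
      · exact lt_or_gt_of_ne (hne m hm (by omega))
    set c0 := cc (fun i => q (i + 1)) m
    have hu := uu_mul
    constructor
    · intro h
      obtain ⟨s1, s2⟩ := step_asc (fun i => q (i + 1)) m h
      refine ⟨?_, s2⟩
      have hl : lpq q (m + 1) = lpq q m := by
        rw [lpq_succ, if_neg]; · simp
        rintro ⟨_, h2⟩; exact lt_asymm h h2
      rw [hl, pow_succ, mul_assoc, s1]
      rcases hm with hm | hm
      · obtain ⟨i1, i2⟩ := ih.1 hm
        rw [i2]
        linear_combination (1 + X) * i1
      · obtain ⟨i1, i2⟩ := ih.2 hm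
        rw [i2]
        linear_combination i1
    · intro h
      obtain ⟨s1, s2⟩ := step_desc (fun i => q (i + 1)) m h
      refine ⟨?_, s2⟩
      rw [pow_succ, ← mul_assoc, mul_assoc (2 * (1 - X) ^ (m + 1)), s1]
      rcases hm with hm | hm
      · have hl : lpq q (m + 1) = lpq q m + 1 := by
          rw [lpq_succ, if_pos ⟨hm, h⟩]
        obtain ⟨i1, i2⟩ := ih.1 hm
        rw [i2, hl]
        linear_combination 4 * X * i1 - (1 + X) ^ m * uu ^ lpq q m * hu
      · have hl : lpq q (m + 1) = lpq q m := by
          rw [lpq_succ, if_neg]; · simp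
          rintro ⟨h2, _⟩; exact lt_asymm hm h2
        obtain ⟨i1, i2⟩ := ih.2 hm
        rw [i2, hl]
        linear_combination (1 + X) * i1

def Compat {n K : ℕ} (π : Equiv.Perm (Fin n)) (f : Fin n → Fin K) : Prop :=
  StrictMono fun i => ky (f i) ((π i : ℤ) + 1)

def Om (n : ℕ) (π : Equiv.Perm (Fin n)) (k : ℕ) : ℕ :=
  (Finset.univ.filter fun f : Fin n → Fin (2 * k + 1) => Compat π f).card

open PowerSeries in
lemma Om_gf (n : ℕ) (π : Equiv.Perm (Fin n)) :
    (1 - X) ^ (n + 1) * PowerSeries.mk (fun k => (Om n π k : ℚ)) = (1 + X) ^ n * uu ^ lpk n π := by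
  cases n with
  | zero =>
    have : ∀ k, Om 0 π k = 1 := by
      intro k
      unfold Om
      rw [Finset.card_eq_one]
      refine ⟨fun i => i.elim0, ?_⟩
      ext f
      simp only [Finset.mem_filter, Finset.mem_univ, true_and, Finset.mem_singleton]
      exact ⟨fun _ => Subsingleton.elim _ _, fun _ => Subsingleton.strictMono _⟩
    simp [this, lpk, one_sub_X_mul_one]
  | succ m =>
    set q : ℕ → ℤ := fun i => (oneLine (m + 1) π i : ℤ) with hq
    have hqv : ∀ i : Fin (m + 1), q (i + 1) = (π i : ℤ) + 1 := by
      intro i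
      have : (i : ℕ) ≤ m := by omega
      simp [hq, oneLine, this]
    have h0 : q 0 < q 1 := by
      have := hqv 0
      simp only [Fin.val_zero, zero_add] at this
      rw [this]
      simp only [hq, oneLine]
      norm_num
    have hne : ∀ i, 1 ≤ i → i ≤ m → q i ≠ q (i + 1) := by
      intro i h1 h2 h
      have e1 := hqv ⟨i - 1, by omega⟩
      have e2 := hqv ⟨i, by omega⟩
      simp only [Nat.sub_add_cancel h1] at e1 e2
      rw [e1, e2] at h
      have : π ⟨i - 1, by omega⟩ = π ⟨i, by omega⟩ := by
        apply Fin.ext; omega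
      have := π.injective this
      simp only [Fin.mk.injEq] at this
      omega
    have hl : lpk (m + 1) π = lpq q m := by
      unfold lpk lpq
      simp [hq]
    have hOm : ∀ k, Om (m + 1) π k = ∑ v ∈ Finset.range (2 * k + 1), cc (fun i => q (i + 1)) m v := by
      intro k
      rw [← card_cc_total]
      unfold Om Compat
      congr 1
      ext f
      simp only [Finset.mem_filter, Finset.mem_univ, true_and, hqv]
    simp only [hOm]
    rw [pow_succ, mul_assoc, sTot_eq, hl]
    obtain ⟨s1, s2⟩ := state q m h0 hne
    have hm : q m < q (m + 1) ∨ q (m + 1) < q m := by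
      rcases Nat.eq_zero_or_pos m with rfl | hm
      · left; exact h0
      · exact lt_or_gt_of_ne (hne m hm (by omega))
    rcases hm with hm | hm
    · obtain ⟨i1, i2⟩ := s1 hm
      rw [i2]
      linear_combination (1 + X) * i1
    · obtain ⟨i1, i2⟩ := s2 hm
      rw [i2]
      linear_combination i1

lemma ap_inv {n : ℕ} (τ : Equiv.Perm (Fin n)) (i : Fin n) : τ (τ⁻¹ i) = i := by simp

lemma inv_ap {n : ℕ} (τ : Equiv.Perm (Fin n)) (i : Fin n) : τ⁻¹ (τ i) = i := by simp

lemma exu_sort {n : ℕ} {L : Type*} [LinearOrder L] (K : Fin n → L) (hK : Function.Injective K) :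
    ∃! g : Equiv.Perm (Fin n), StrictMono (K ∘ g) := by
  refine ⟨Tuple.sort K, ?_, ?_⟩
  · exact (Tuple.monotone_sort K).strictMono_of_injective (hK.comp (Equiv.injective _))
  · intro g hg
    have := Tuple.unique_monotone hg.monotone (Tuple.monotone_sort K)
    ext i
    have := congrFun this i
    exact congrArg Fin.val (hK this)

lemma sum_Om (n k : ℕ) : ∑ π : Equiv.Perm (Fin n), Om n π k = (2 * k + 1) ^ n := by
  have h1 : ∀ π : Equiv.Perm (Fin n), Om n π k =
      (Finset.univ.filter fun w : Fin n → Fin (2 * k + 1) =>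
        StrictMono ((fun j : Fin n => ky (w j) ((j : ℤ) + 1)) ∘ π)).card := by
    intro π
    unfold Om
    refine Finset.card_nbij' (fun f => f ∘ π.symm) (fun w => w ∘ π) ?_ ?_ ?_ ?_
    · intro f hf
      simp only [Finset.coe_filter, Finset.mem_univ, true_and, Set.mem_ofPred_eq] at hf ⊢
      simpa [Compat, Function.comp_def] using hf
    · intro f hf
      simp only [Finset.coe_filter, Finset.mem_univ, true_and, Set.mem_ofPred_eq] at hf ⊢
      simpa [Compat, Function.comp_def] using hf
    · intro f hf
      funext i; simp
    · intro f hf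
      funext i; simp
  simp only [h1, Finset.card_filter]
  rw [Finset.sum_comm]
  have h2 : ∀ w : Fin n → Fin (2 * k + 1), (∑ π : Equiv.Perm (Fin n),
      if StrictMono ((fun j : Fin n => ky (w j) ((j : ℤ) + 1)) ∘ π) then 1 else 0) = 1 := by
    intro w
    rw [← Finset.card_filter, Finset.card_eq_one]
    obtain ⟨g, hg, hu⟩ := exu_sort (fun j : Fin n => ky (w j) ((j : ℤ) + 1)) (by
      intro i j hij
      have := (ky_inj _ _ _ _ hij).2
      apply Fin.ext; omega)
    refine ⟨g, ?_⟩
    ext π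
    simp only [Finset.mem_filter, Finset.mem_univ, true_and, Finset.mem_singleton]
    exact ⟨fun h => hu π h, fun h => h ▸ hg⟩
  simp only [h2]
  simp

lemma sgn_cases (a : ℕ) : (a % 2 = 0 ∧ (-1 : ℤ) ^ a = 1) ∨ (a % 2 = 1 ∧ (-1 : ℤ) ^ a = -1) := by
  rcases Nat.even_or_odd a with h | h
  · left; exact ⟨Nat.even_iff.mp h, h.neg_one_pow⟩
  · right; exact ⟨Nat.odd_iff.mp h, h.neg_one_pow⟩

lemma ky_le (a b : ℕ) (x y : ℤ) :
    ky a x ≤ ky b y ↔ a < b ∨ a = b ∧ (-1) ^ a * x ≤ (-1) ^ a * y := by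
  unfold ky
  rw [Prod.Lex.toLex_le_toLex]
  simp only [Nat.cast_lt, Nat.cast_inj]
  constructor
  · rintro (h | ⟨h, h'⟩)
    · exact Or.inl h
    · subst h; exact Or.inr ⟨rfl, h'⟩
  · rintro (h | ⟨h, h'⟩)
    · exact Or.inl h
    · subst h; exact Or.inr ⟨rfl, h'⟩

def tw {K : ℕ} (x : Fin K × Fin K) : ℤ ×ₗ ℤ := ky x.1 (x.2 : ℕ)

lemma tw_inj {K : ℕ} : Function.Injective (tw (K := K)) := by
  rintro ⟨a, b⟩ ⟨c, d⟩ h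
  obtain ⟨h1, h2⟩ := ky_inj _ _ _ _ h
  simp only at h1 h2
  ext
  · exact h1
  · simpa using h2

def Sorted {n K : ℕ} (b : Fin n → Fin K × Fin K) : Prop := Monotone (tw ∘ b)

def Mixed {K : ℕ} (x : Fin K × Fin K) : Prop := (x.1 + x.2 : ℕ) % 2 = 1

def MInj {n K : ℕ} (b : Fin n → Fin K × Fin K) : Prop := ∀ i j, b i = b j → Mixed (b i) → i = j

def SwP {n K : ℕ} (b : Fin n → Fin K × Fin K) (π : Equiv.Perm (Fin n)) : Prop :=
  ∀ i, b (π i) = (b i).swap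

def Good {n K : ℕ} (b : Fin n → Fin K × Fin K) : Prop := (∃ π, SwP b π) ∧ MInj b

def CM {n K : ℕ} (b : Fin n → Fin K × Fin K) (τ : Equiv.Perm (Fin n)) : Prop :=
  SwP b τ ∧ ∀ i j, i < j → b i = b j →
    (-1) ^ ((b i).1 : ℕ) * (τ i : ℤ) < (-1) ^ ((b i).1 : ℕ) * (τ j : ℤ)

def KK {n K : ℕ} (b : Fin n → Fin K × Fin K) (i : Fin n) : (ℤ ×ₗ ℤ) ×ₗ ℤ :=
  toLex (tw (b i).swap, (-1) ^ ((b i).1 : ℕ) * (i : ℤ))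

lemma KK_inj {n K : ℕ} (b : Fin n → Fin K × Fin K) : Function.Injective (KK b) := by
  intro i j h
  unfold KK at h
  have h1 := congrArg ofLex h
  simp only [ofLex_toLex, Prod.mk.injEq] at h1
  obtain ⟨h1, h2⟩ := h1
  have h3 : b i = b j := Prod.swap_injective (tw_inj h1)
  rw [h3] at h2
  have := mul_left_cancel₀ (pow_ne_zero _ (by norm_num)) h2
  apply Fin.ext; exact_mod_cast this

lemma SwP.inv {n K : ℕ} {b : Fin n → Fin K × Fin K} {τ : Equiv.Perm (Fin n)} (h : SwP b τ) :
    SwP b τ⁻¹ := by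
  intro i
  have := h (τ⁻¹ i)
  simp only [ap_inv] at this
  rw [this, Prod.swap_swap]

lemma CM_mono {n K : ℕ} {b : Fin n → Fin K × Fin K} {τ : Equiv.Perm (Fin n)} (hs : Sorted b)
    (h : CM b τ) : StrictMono (KK b ∘ (τ⁻¹ : Equiv.Perm (Fin n))) := by
  intro i j hij
  simp only [Function.comp, KK]
  have hi := h.1 (τ⁻¹ i)
  have hj := h.1 (τ⁻¹ j)
  simp only [ap_inv] at hi hj
  rw [← hi, ← hj, Prod.Lex.toLex_lt_toLex]
  rcases (hs hij.le).lt_or_eq with hlt | heq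
  · left; exact hlt
  · right
    refine ⟨heq, ?_⟩
    have hb : b i = b j := tw_inj heq
    have hb' : b (τ⁻¹ i) = b (τ⁻¹ j) := Prod.swap_injective (by rw [← hi, ← hj, hb])
    have hne : τ⁻¹ i ≠ τ⁻¹ j := fun he => hij.ne (τ⁻¹.injective he)
    have hij' : (i : ℤ) < j := by exact_mod_cast hij
    rw [hb']
    dsimp only
    rcases lt_or_gt_of_ne hne with hl | hl
    · have h2 := h.2 _ _ hl hb'
      have hl' : ((τ⁻¹ i : Fin n) : ℤ) < (τ⁻¹ j : Fin n) := by exact_mod_cast hl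
      simp only [ap_inv, hb'] at h2
      rcases sgn_cases (b (τ⁻¹ j)).1 with ⟨_, e⟩ | ⟨_, e⟩ <;> rw [e] at h2 ⊢ <;> linarith
    · have h2 := h.2 _ _ hl hb'.symm
      have hl' : ((τ⁻¹ j : Fin n) : ℤ) < (τ⁻¹ i : Fin n) := by exact_mod_cast hl
      simp only [ap_inv] at h2
      rcases sgn_cases (b (τ⁻¹ j)).1 with ⟨_, e⟩ | ⟨_, e⟩ <;> rw [e] at h2 ⊢ <;> linarith

lemma CM_unique {n K : ℕ} {b : Fin n → Fin K × Fin K} {τ τ' : Equiv.Perm (Fin n)} (hs : Sorted b)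
    (h : CM b τ) (h' : CM b τ') : τ = τ' := by
  have := (exu_sort (KK b) (KK_inj b)).unique (CM_mono hs h) (CM_mono hs h')
  exact inv_injective this

lemma CM_exists {n K : ℕ} {b : Fin n → Fin K × Fin K} (hs : Sorted b)
    (hπ : ∃ π, SwP b π) : ∃ τ, CM b τ := by
  obtain ⟨g, hg, -⟩ := exu_sort (KK b) (KK_inj b)
  obtain ⟨π, hπ⟩ := hπ
  have hm : Monotone ((tw ∘ b) ∘ (π * g : Equiv.Perm (Fin n))) := by
    intro i j hij
    have := hg.monotone hij
    simp only [Function.comp, KK] at this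
    rw [Prod.Lex.toLex_le_toLex] at this
    simp only [Function.comp, Equiv.Perm.mul_apply, hπ _]
    rcases this with h | h
    · exact h.le
    · exact h.1.le
  have hb : ∀ i, (b (g i)).swap = b i := by
    have h1 := Tuple.unique_monotone hm (τ := 1) (by simpa [Sorted] using hs)
    intro i
    have := congrFun h1 i
    simp only [Function.comp, Equiv.Perm.mul_apply, hπ _] at this
    exact tw_inj this
  have hsw : SwP b g⁻¹ := by
    intro i
    have := hb (g⁻¹ i)
    simpa using this.symm
  refine ⟨g⁻¹, hsw, ?_⟩
  intro i j hij hbij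
  have key : KK b i < KK b j ↔ g⁻¹ i < g⁻¹ j := by
    have := hg.lt_iff_lt (a := g⁻¹ i) (b := g⁻¹ j)
    simpa using this
  have key' : KK b j < KK b i ↔ g⁻¹ j < g⁻¹ i := by
    have := hg.lt_iff_lt (a := g⁻¹ j) (b := g⁻¹ i)
    simpa using this
  simp only [KK, hbij, Prod.Lex.toLex_lt_toLex, lt_self_iff_false, false_or, true_and] at key key'
  have hij' : (i : ℤ) < j := by exact_mod_cast hij
  rw [hbij]
  rcases sgn_cases (b j).1 with ⟨_, e⟩ | ⟨_, e⟩ <;> rw [e] at key key' ⊢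
  · have := key.1 (by linarith)
    have : ((g⁻¹ i : Fin n) : ℤ) < (g⁻¹ j : Fin n) := by exact_mod_cast this
    linarith
  · have := key'.1 (by linarith)
    have : ((g⁻¹ j : Fin n) : ℤ) < (g⁻¹ i : Fin n) := by exact_mod_cast this
    linarith

lemma CM_inv {n K : ℕ} {b : Fin n → Fin K × Fin K} {τ : Equiv.Perm (Fin n)} (hm : MInj b)
    (h : CM b τ) : CM b τ⁻¹ := by
  refine ⟨h.1.inv, ?_⟩
  intro i j hij hb
  have hi := h.1.inv i
  have hj := h.1.inv j
  have hmix : ¬ Mixed (b i) := fun hmx => hij.ne (hm i j hb hmx)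
  have hij' : (i : ℤ) < j := by exact_mod_cast hij
  have hb' : b (τ⁻¹ i) = b (τ⁻¹ j) := by rw [hi, hj, hb]
  have hfst : (b (τ⁻¹ i)).1 = (b i).2 := by rw [hi]; rfl
  have hfst' : (b (τ⁻¹ j)).1 = (b i).2 := by rw [← hb', hfst]
  unfold Mixed at hmix
  have hne : τ⁻¹ i ≠ τ⁻¹ j := fun he => hij.ne (τ⁻¹.injective he)
  rcases lt_or_gt_of_ne hne with hl | hl
  · have h2 := h.2 _ _ hl hb'
    have hl' : ((τ⁻¹ i : Fin n) : ℤ) < (τ⁻¹ j : Fin n) := by exact_mod_cast hl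
    simp only [ap_inv, hfst] at h2
    rcases sgn_cases (b i).1 with ⟨p, e⟩ | ⟨p, e⟩ <;>
    rcases sgn_cases (b i).2 with ⟨p', e'⟩ | ⟨p', e'⟩ <;> rw [e'] at h2 <;> rw [e] <;>
      first | linarith | (exfalso; omega)
  · have h2 := h.2 _ _ hl hb'.symm
    have hl' : ((τ⁻¹ j : Fin n) : ℤ) < (τ⁻¹ i : Fin n) := by exact_mod_cast hl
    simp only [ap_inv, hfst'] at h2
    rcases sgn_cases (b i).1 with ⟨p, e⟩ | ⟨p, e⟩ <;>
    rcases sgn_cases (b i).2 with ⟨p', e'⟩ | ⟨p', e'⟩ <;> rw [e'] at h2 <;> rw [e] <;>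
      first | linarith | (exfalso; omega)

lemma inv_to_b {n K : ℕ} (τ : Equiv.Perm (Fin n)) (f : Fin n → Fin K) (h2 : ∀ i, τ (τ i) = i)
    (hc : Compat τ f) : Sorted (fun i => (f i, f (τ i))) ∧ Good (fun i => (f i, f (τ i))) ∧
      CM (fun i => (f i, f (τ i))) τ := by
  have hc' : ∀ i j, i < j → (f i : ℕ) < f j ∨ f i = f j ∧
      (-1) ^ (f i : ℕ) * (τ i : ℤ) < (-1) ^ (f i : ℕ) * (τ j : ℤ) := by
    intro i j hij
    have := hc hij
    dsimp only at this
    rw [ky_lt] at this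
    rcases this with h | ⟨h, h'⟩
    · exact Or.inl h
    · refine Or.inr ⟨Fin.ext h, by linarith⟩
  have hmono : ∀ i j, i < j → (f i : ℕ) ≤ f j := by
    intro i j hij
    rcases hc' i j hij with h | ⟨h, _⟩
    · exact h.le
    · rw [h]
  have hsw : SwP (fun i => (f i, f (τ i))) τ := by
    intro i
    simp [h2]
  refine ⟨?_, ⟨⟨τ, hsw⟩, ?_⟩, hsw, ?_⟩
  · intro i j hij
    rcases hij.eq_or_lt with rfl | hij
    · exact le_rfl
    · simp only [Function.comp, tw]
      rw [ky_le]
      rcases hc' i j hij with h | ⟨h, h'⟩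
      · exact Or.inl h
      · right
        refine ⟨by rw [h], ?_⟩
        rcases sgn_cases (f i) with ⟨p, e⟩ | ⟨p, e⟩ <;> rw [e] at h' ⊢
        · have : τ i < τ j := by
            apply Fin.lt_def.mpr; omega
          have := hmono _ _ this
          have : ((f (τ i) : ℕ) : ℤ) ≤ (f (τ j) : ℕ) := by exact_mod_cast this
          linarith
        · have : τ j < τ i := by
            apply Fin.lt_def.mpr; omega
          have := hmono _ _ this
          have : ((f (τ j) : ℕ) : ℤ) ≤ (f (τ i) : ℕ) := by exact_mod_cast this
          linarith
  · have main : ∀ i j, i < j → f i = f j → f (τ i) = f (τ j) →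
        ¬ ((f i + f (τ i) : ℕ) % 2 = 1) := by
      intro i j hij e1 e2 hm
      have hij' : (i : ℤ) < j := by exact_mod_cast hij
      have h1 : (-1) ^ (f i : ℕ) * (τ i : ℤ) < (-1) ^ (f i : ℕ) * (τ j : ℤ) := by
        rcases hc' i j hij with h | ⟨h, h'⟩
        · rw [e1] at h; exact absurd h (lt_irrefl _)
        · exact h'
      rcases sgn_cases (f i) with ⟨p, e⟩ | ⟨p, e⟩ <;> rw [e] at h1
      · have hlt : τ i < τ j := by
          apply Fin.lt_def.mpr; omega
        rcases hc' _ _ hlt with h | ⟨h, h'⟩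
        · rw [e2] at h; exact absurd h (lt_irrefl _)
        · rw [h2, h2] at h'
          rcases sgn_cases (f (τ i)) with ⟨p', e'⟩ | ⟨p', e'⟩ <;> rw [e'] at h'
          · omega
          · linarith
      · have hlt : τ j < τ i := by
          apply Fin.lt_def.mpr; omega
        rcases hc' _ _ hlt with h | ⟨h, h'⟩
        · rw [e2] at h; exact absurd h (lt_irrefl _)
        · rw [h2, h2, ← e2] at h'
          rcases sgn_cases (f (τ i)) with ⟨p', e'⟩ | ⟨p', e'⟩ <;> rw [e'] at h'
          · linarith
          · omega
    intro i j hb hm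
    simp only [Prod.mk.injEq] at hb
    by_contra hne
    rcases lt_or_gt_of_ne hne with hl | hl
    · exact main i j hl hb.1 hb.2 hm
    · refine main j i hl hb.1.symm hb.2.symm ?_
      rw [← hb.1, ← hb.2]; exact hm
  · intro i j hij hb
    simp only [Prod.mk.injEq] at hb
    rcases hc' i j hij with h | ⟨h, h'⟩
    · rw [hb.1] at h; exact absurd h (lt_irrefl _)
    · exact h'

lemma b_to_inv {n K : ℕ} (b : Fin n → Fin K × Fin K) (hs : Sorted b) (hg : Good b) :
    ∃ τ : Equiv.Perm (Fin n), (∀ i, τ (τ i) = i) ∧ Compat τ (fun i => (b i).1) ∧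
      ∀ i, (b i).2 = (b (τ i)).1 := by
  obtain ⟨τ, hτ⟩ := CM_exists hs hg.1
  have hinv := CM_unique hs hτ (CM_inv hg.2 hτ)
  have h2 : ∀ i, τ (τ i) = i := by
    intro i
    have h3 : τ (τ i) = τ⁻¹ (τ i) := by rw [← hinv]
    rw [h3, inv_ap]
  have hsnd : ∀ i, (b i).2 = (b (τ i)).1 := by
    intro i; rw [hτ.1 i]; rfl
  have hmono : ∀ i j, i ≤ j → ((b i).1 : ℕ) ≤ (b j).1 := by
    intro i j hij
    have := hs hij
    simp only [Function.comp, tw] at this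
    rw [ky_le] at this
    omega
  refine ⟨τ, h2, ?_, hsnd⟩
  intro i j hij
  dsimp only
  rw [ky_lt]
  have := hs hij.le
  simp only [Function.comp, tw] at this
  rw [ky_le] at this
  rcases this with h | ⟨h, h'⟩
  · exact Or.inl h
  · right
    refine ⟨h, ?_⟩
    by_cases he : (b i).2 = (b j).2
    · have hb : b i = b j := Prod.ext (Fin.ext h) he
      have := hτ.2 i j hij hb
      linarith
    · have he' : ((b i).2 : ℕ) ≠ (b j).2 := fun h => he (Fin.ext h)
      rcases sgn_cases (b i).1 with ⟨p, e⟩ | ⟨p, e⟩ <;> rw [e] at h' ⊢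
      · have : τ i < τ j := by
          by_contra hcon
          have := hmono _ _ (not_lt.mp hcon)
          rw [← hsnd, ← hsnd] at this
          omega
        have : (τ i : ℤ) < τ j := by exact_mod_cast this
        linarith
      · have : τ j < τ i := by
          by_contra hcon
          have := hmono _ _ (not_lt.mp hcon)
          rw [← hsnd, ← hsnd] at this
          omega
        have : (τ j : ℤ) < τ i := by exact_mod_cast this
        linarith

lemma mem_invSet_iff {n : ℕ} (τ : Equiv.Perm (Fin n)) : τ ∈ invSet n ↔ ∀ i, τ (τ i) = i := by
  unfold invSet
  simp only [Finset.mem_filter, Finset.mem_univ, true_and, pow_two]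
  rw [Equiv.ext_iff]
  simp

lemma card_sorted (n k : ℕ) :
    ∑ τ ∈ invSet n, Om n τ k =
      (Finset.univ.filter fun b : Fin n → Fin (2 * k + 1) × Fin (2 * k + 1) =>
        Good b ∧ Sorted b).card := by
  unfold Om
  rw [← Finset.card_sigma]
  refine Finset.card_nbij (fun x i => (x.2 i, x.2 (x.1 i))) ?_ ?_ ?_
  · rintro ⟨τ, f⟩ hx
    simp only [Finset.coe_sigma, Set.mem_sigma_iff, Finset.mem_coe, Finset.mem_filter,
      Finset.mem_univ, true_and, mem_invSet_iff] at hx ⊢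
    have := inv_to_b τ f hx.1 hx.2
    exact ⟨this.2.1, this.1⟩
  · rintro ⟨τ, f⟩ hx ⟨τ', f'⟩ hx' heq
    simp only [Finset.coe_sigma, Set.mem_sigma_iff, Finset.mem_coe, Finset.mem_filter,
      Finset.mem_univ, true_and, mem_invSet_iff] at hx hx'
    have h1 := inv_to_b τ f hx.1 hx.2
    have h2 := inv_to_b τ' f' hx'.1 hx'.2
    dsimp only at heq
    have hf : f = f' := by
      funext i
      exact congrArg Prod.fst (congrFun heq i)
    have : τ = τ' := by
      apply CM_unique h1.1 h1.2.2
      rw [heq]; exact h2.2.2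
    subst hf this
    rfl
  · intro b hb
    simp only [Finset.coe_filter, Finset.mem_univ, true_and, Set.mem_ofPred_eq] at hb
    obtain ⟨τ, h1, h2, h3⟩ := b_to_inv b hb.2 hb.1
    refine ⟨⟨τ, fun i => (b i).1⟩, ?_, ?_⟩
    · simp only [Finset.coe_sigma, Set.mem_sigma_iff, Finset.mem_coe, Finset.mem_filter,
        Finset.mem_univ, true_and, mem_invSet_iff]
      exact ⟨h1, h2⟩
    · funext i
      dsimp only
      rw [← h3]

lemma SwP_comp {n K : ℕ} {b : Fin n → Fin K × Fin K} (g : Equiv.Perm (Fin n)) (h : Good b) :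
    Good (b ∘ g) := by
  obtain ⟨⟨π, hπ⟩, hm⟩ := h
  refine ⟨⟨g⁻¹ * π * g, ?_⟩, ?_⟩
  · intro i
    simp [hπ _]
  · intro i j hb hmx
    exact g.injective (hm _ _ hb hmx)

lemma card_torsor {n K : ℕ} (b : Fin n → Fin K × Fin K) (hg : Good b) :
    (Finset.univ.filter fun π => SwP b π).card =
      (Finset.univ.filter fun g : Equiv.Perm (Fin n) => Sorted (b ∘ g)).card := by
  obtain ⟨⟨π₀, hπ₀⟩, -⟩ := hg
  obtain ⟨g₀, hg₀⟩ : ∃ g₀ : Equiv.Perm (Fin n), Sorted (b ∘ g₀) :=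
    ⟨Tuple.sort (tw ∘ b), Tuple.monotone_sort (tw ∘ b)⟩
  have hu : ∀ g : Equiv.Perm (Fin n), Sorted (b ∘ g) ↔ ∀ i, b (g i) = b (g₀ i) := by
    intro g
    constructor
    · intro h i
      have := Tuple.unique_monotone (f := tw ∘ b) h hg₀
      exact tw_inj (congrFun this i)
    · intro h
      have : b ∘ g = b ∘ g₀ := funext h
      rw [this]; exact hg₀
  refine Finset.card_nbij' (fun π => π * π₀⁻¹ * g₀) (fun g => g * g₀⁻¹ * π₀) ?_ ?_ ?_ ?_
  · intro π hπ
    simp only [Finset.coe_filter, Finset.mem_univ, true_and, Set.mem_ofPred_eq, hu] at hπ ⊢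
    intro i
    simp only [Equiv.Perm.mul_apply]
    rw [hπ, hπ₀.inv, Prod.swap_swap]
  · intro g hg
    simp only [Finset.coe_filter, Finset.mem_univ, true_and, Set.mem_ofPred_eq, hu] at hg ⊢
    intro i
    simp only [Equiv.Perm.mul_apply]
    rw [hg, ap_inv, hπ₀]
  · intro π hπ; group
  · intro π hπ; group

lemma sum_good (n k : ℕ) :
    ∑ b ∈ Finset.univ.filter (fun b : Fin n → Fin (2 * k + 1) × Fin (2 * k + 1) => Good b),
      (Finset.univ.filter fun π => SwP b π).card = n.factorial * ∑ τ ∈ invSet n, Om n τ k := by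
  rw [Finset.sum_congr rfl (g := fun b =>
    (Finset.univ.filter fun g : Equiv.Perm (Fin n) => Sorted (b ∘ g)).card)
    (fun b hb => card_torsor b (Finset.mem_filter.mp hb).2)]
  rw [card_sorted]
  simp only [Finset.card_filter]
  rw [Finset.sum_filter]
  have : ∀ b : Fin n → Fin (2 * k + 1) × Fin (2 * k + 1),
      (if Good b then ∑ g : Equiv.Perm (Fin n), (if Sorted (b ∘ g) then 1 else 0) else 0) =
        ∑ g : Equiv.Perm (Fin n), if Good b ∧ Sorted (b ∘ g) then 1 else 0 := by
    intro b
    by_cases h : Good b <;> simp [h]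
  simp only [this]
  rw [Finset.sum_comm]
  have h2 : ∀ g : Equiv.Perm (Fin n),
      (∑ b : Fin n → Fin (2 * k + 1) × Fin (2 * k + 1), if Good b ∧ Sorted (b ∘ g) then 1 else 0)
      = ∑ b : Fin n → Fin (2 * k + 1) × Fin (2 * k + 1), if Good b ∧ Sorted b then 1 else 0 := by
    intro g
    refine Fintype.sum_equiv (Equiv.arrowCongr g.symm (Equiv.refl _)) _ _ ?_
    intro b
    have e : (Equiv.arrowCongr g.symm (Equiv.refl (Fin (2 * k + 1) × Fin (2 * k + 1)))) b = b ∘ g := by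
      funext i; simp
    rw [e]
    have : Good (b ∘ g) ↔ Good b := by
      constructor
      · intro h
        have := SwP_comp g⁻¹ h
        have e : (b ∘ g) ∘ (g⁻¹ : Equiv.Perm (Fin n)) = b := by funext i; simp
        rwa [e] at this
      · exact SwP_comp g
    rw [this]
  simp only [h2, Finset.sum_const, Finset.card_univ, Fintype.card_perm, Fintype.card_fin, smul_eq_mul]

abbrev QQ {α : Type*} (σ : Equiv.Perm α) := Quotient (Equiv.Perm.SameCycle.setoid σ)

def qcard {α : Type*} [Fintype α] (σ : Equiv.Perm α) (q : QQ σ) : ℕ :=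
  (Finset.univ.filter fun i : α => (Quotient.mk _ i : QQ σ) = q).card

lemma qmk_eq {α : Type*} (σ : Equiv.Perm α) (i j : α) :
    (Quotient.mk _ i : QQ σ) = Quotient.mk _ j ↔ σ.SameCycle i j := by
  rw [Quotient.eq]; rfl

lemma qcard_nonfixed {α : Type*} [Fintype α] (σ : Equiv.Perm α) (i : α) (h : σ i ≠ i) :
    qcard σ (Quotient.mk _ i) = (σ.cycleOf i).support.card := by
  unfold qcard
  congr 1
  ext j
  simp only [Finset.mem_filter, Finset.mem_univ, true_and]
  rw [qmk_eq, Equiv.Perm.mem_support_cycleOf_iff' h]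
  exact ⟨fun h => h.symm, fun h => h.symm⟩

lemma qcard_fixed {α : Type*} [Fintype α] (σ : Equiv.Perm α) (i : α) (h : σ i = i) :
    qcard σ (Quotient.mk _ i) = 1 := by
  unfold qcard
  rw [Finset.card_eq_one]
  refine ⟨i, ?_⟩
  ext j
  simp only [Finset.mem_filter, Finset.mem_univ, true_and, Finset.mem_singleton]
  rw [qmk_eq]
  constructor
  · intro hs
    exact (hs.symm.eq_of_left h).symm
  · rintro rfl; exact Equiv.Perm.SameCycle.refl _ _

lemma prod_parts {α M : Type*} [Fintype α] [CommMonoid M] (σ : Equiv.Perm α) (h : ℕ → M) :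
    ∏ q : QQ σ, h (qcard σ q) =
      ((σ.cycleType + Multiset.replicate (Fintype.card α - σ.support.card) 1).map h).prod := by
  rw [Multiset.map_add, Multiset.prod_add, Multiset.map_replicate, Multiset.prod_replicate]
  rw [← Finset.prod_filter_mul_prod_filter_not Finset.univ (fun q : QQ σ => σ q.out ≠ q.out)]
  congr 1
  · rw [Equiv.Perm.cycleType_def, Multiset.map_map]
    change _ = ∏ g ∈ σ.cycleFactorsFinset, (h ∘ Finset.card ∘ Equiv.Perm.support) g
    refine Finset.prod_nbij (fun q => σ.cycleOf q.out) ?_ ?_ ?_ ?_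
    · intro q hq
      simp only [Finset.mem_filter, Finset.mem_univ, true_and] at hq
      rw [Equiv.Perm.cycleOf_mem_cycleFactorsFinset_iff, Equiv.Perm.mem_support]
      exact hq
    · intro q hq q' hq' heq
      simp only [Finset.coe_filter, Finset.mem_univ, true_and, Set.mem_ofPred_eq] at hq hq'
      have := (Equiv.Perm.sameCycle_iff_cycleOf_eq_of_mem_support
        (Equiv.Perm.mem_support.mpr hq) (Equiv.Perm.mem_support.mpr hq')).mpr heq
      rw [← qmk_eq, Quotient.out_eq, Quotient.out_eq] at this
      exact this
    · intro g hg
      rw [Finset.mem_coe] at hg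
      obtain ⟨a, ha⟩ := (Equiv.Perm.mem_cycleFactorsFinset_iff.mp hg).1.nonempty_support
      have h1 := Equiv.Perm.cycle_is_cycleOf ha hg
      have ha' : a ∈ σ.support := Equiv.Perm.mem_cycleFactorsFinset_support_le hg ha
      have hsc : σ.SameCycle (Quotient.mk _ a : QQ σ).out a := by
        rw [← qmk_eq, Quotient.out_eq]
      refine ⟨Quotient.mk _ a, ?_, ?_⟩
      · simp only [Finset.coe_filter, Finset.mem_univ, true_and, Set.mem_ofPred_eq]
        rw [← Equiv.Perm.mem_support]
        exact hsc.mem_support_iff.mpr ha'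
      · dsimp only
        rw [h1]
        exact hsc.cycleOf_eq
    · intro q hq
      simp only [Finset.mem_filter, Finset.mem_univ, true_and] at hq
      conv_lhs => rw [← Quotient.out_eq q]
      rw [qcard_nonfixed σ _ hq]
      rfl
  · rw [Finset.prod_congr rfl (g := fun _ => h 1)]
    · rw [Finset.prod_const]
      congr 1
      rw [← Finset.card_compl]
      refine Finset.card_nbij (fun q => q.out) ?_ ?_ ?_
      · intro q hq
        simpa using hq
      · intro q _ q' _ heq
        exact Quotient.out_injective heq
      · intro i hi
        simp only [Finset.coe_compl, Set.mem_compl_iff, Finset.mem_coe, Equiv.Perm.mem_support,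
          not_not] at hi
        have hsc : σ.SameCycle (Quotient.mk _ i : QQ σ).out i := by
          rw [← qmk_eq, Quotient.out_eq]
        have : i = (Quotient.mk _ i : QQ σ).out := hsc.symm.eq_of_left hi
        refine ⟨Quotient.mk _ i, ?_, this.symm⟩
        simp only [Finset.coe_filter, Finset.mem_univ, true_and, Set.mem_ofPred_eq, not_not]
        rw [← this]; exact hi
    · intro q hq
      simp only [Finset.mem_filter, Finset.mem_univ, true_and, not_not] at hq
      conv_lhs => rw [← Quotient.out_eq q]
      rw [qcard_fixed σ _ hq]

lemma sign_eq_prod {α : Type*} [inst : DecidableEq α] [Fintype α] (σ : Equiv.Perm α) :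
    (Equiv.Perm.sign σ : ℤ) = ∏ q : QQ σ, (-1 : ℤ) ^ (qcard σ q + 1) := by
  obtain rfl : inst = (fun a b => Classical.propDecidable (a = b)) := Subsingleton.elim _ _
  rw [prod_parts σ (fun m => (-1 : ℤ) ^ (m + 1)), Multiset.map_add, Multiset.prod_add,
    Multiset.map_replicate, Multiset.prod_replicate, Equiv.Perm.sign_of_cycleType]
  have : ∀ s : Multiset ℕ, (s.map fun m => (-1 : ℤ) ^ (m + 1)).prod
      = (-1) ^ (s.sum + Multiset.card s) := by
    intro s
    induction s using Multiset.induction_on with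
    | empty => simp
    | cons a s ih =>
      simp only [Multiset.map_cons, Multiset.prod_cons, ih, Multiset.sum_cons, Multiset.card_cons]
      ring
  rw [this]
  simp

def eps {n K : ℕ} (σ : Equiv.Perm (Fin n)) (c : Fin n → Fin K) : ℤ :=
  if h : ∀ i, c (σ i) = c i then
    ((Equiv.Perm.sign (σ.subtypePerm (p := fun i => (c i : ℕ) % 2 = 1)
      (fun i => by rw [h i])) : ℤˣ) : ℤ) else 0

lemma eps_quot {n K : ℕ} (σ : Equiv.Perm (Fin n)) (d : QQ σ → Fin K) :
    eps σ (fun i => d (Quotient.mk _ i)) =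
      ∏ q : QQ σ, if (d q : ℕ) % 2 = 1 then (-1 : ℤ) ^ (qcard σ q + 1) else 1 := by
  have hσ : ∀ i, d (Quotient.mk _ (σ i)) = d (Quotient.mk _ i) := by
    intro i
    congr 1
    rw [qmk_eq]
    exact Equiv.Perm.sameCycle_apply_left.mpr (Equiv.Perm.SameCycle.refl _ _)
  unfold eps
  rw [dif_pos hσ, sign_eq_prod, ← Finset.prod_filter]
  set ρ := σ.subtypePerm (p := fun i => (d (Quotient.mk _ i) : ℕ) % 2 = 1)
      (fun i => by rw [hσ i]) with hρ
  have hmap : ∀ x y : {i : Fin n // (d (Quotient.mk _ i) : ℕ) % 2 = 1},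
      ρ.SameCycle x y ↔ σ.SameCycle x.1 y.1 := by
    intro x y
    rw [hρ, Equiv.Perm.sameCycle_subtypePerm]
  let φ : QQ ρ → QQ σ := Quotient.map Subtype.val (fun x y h => (hmap x y).mp h)
  have hφ : ∀ x, φ (Quotient.mk _ x) = Quotient.mk _ x.1 := fun x => rfl
  refine Finset.prod_nbij φ ?_ ?_ ?_ ?_
  · intro q _
    induction q using Quotient.inductionOn with
    | _ x =>
      rw [hφ]
      simp only [Finset.mem_filter, Finset.mem_univ, true_and]
      exact x.2
  · intro q _ q' _
    induction q using Quotient.inductionOn with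
    | _ x =>
      induction q' using Quotient.inductionOn with
      | _ y =>
        rw [hφ, hφ, qmk_eq, qmk_eq, hmap]
        exact id
  · intro q hq
    induction q using Quotient.inductionOn with
    | _ i =>
      simp only [Finset.coe_filter, Finset.mem_univ, true_and, Set.mem_ofPred_eq] at hq
      exact ⟨Quotient.mk _ ⟨i, hq⟩, by simp, hφ _⟩
  · intro q _
    induction q using Quotient.inductionOn with
    | _ x =>
      congr 2
      rw [hφ]
      unfold qcard
      refine Finset.card_nbij Subtype.val ?_ ?_ ?_
      · intro y hy
        simp only [Finset.coe_filter, Set.mem_ofPred_eq, Finset.mem_univ, true_and, qmk_eq] at hy ⊢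
        exact (hmap _ _).mp hy
      · exact Subtype.val_injective.injOn
      · intro j hj
        simp only [Finset.coe_filter, Finset.mem_univ, true_and, Set.mem_ofPred_eq] at hj
        have hd : (d (Quotient.mk _ j) : ℕ) % 2 = 1 := by rw [hj]; exact x.2
        refine ⟨⟨j, hd⟩, ?_, rfl⟩
        simp only [Finset.coe_filter, Finset.mem_univ, true_and, Set.mem_ofPred_eq, qmk_eq] at hj ⊢
        exact (hmap _ _).mpr hj

lemma color_sum (k p : ℕ) : (∑ a : Fin (2 * k + 1), if (a : ℕ) % 2 = 1 then (-1 : ℤ) ^ (p + 1) else 1)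
    = if p % 2 = 1 then 2 * (k : ℤ) + 1 else 1 := by
  rw [Fin.sum_univ_eq_sum_range (fun a => if a % 2 = 1 then (-1 : ℤ) ^ (p + 1) else 1)]
  induction k with
  | zero => simp
  | succ k ih =>
    rw [show 2 * (k + 1) + 1 = 2 * k + 1 + 1 + 1 by ring, Finset.sum_range_succ,
      Finset.sum_range_succ, ih, if_pos (by omega : (2 * k + 1) % 2 = 1),
      if_neg (by omega : ¬ (2 * k + 1 + 1) % 2 = 1)]
    rcases sgn_cases p with ⟨h, e⟩ | ⟨h, e⟩ <;> rw [pow_succ, e] <;> simp [h]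
    ring

lemma eps_sum (n k : ℕ) (σ : Equiv.Perm (Fin n)) :
    ∑ c : Fin n → Fin (2 * k + 1), eps σ c = (2 * (k : ℤ) + 1) ^ numOddCycles n σ := by
  have h1 : ∑ c : Fin n → Fin (2 * k + 1), eps σ c =
      ∑ d : QQ σ → Fin (2 * k + 1), eps σ (fun i => d (Quotient.mk _ i)) := by
    symm
    refine Finset.sum_of_injOn (fun d i => d (Quotient.mk _ i)) ?_ ?_ ?_ ?_
    · intro d _ d' _ h
      funext q
      induction q using Quotient.inductionOn with
      | _ i => exact congrFun h i
    · intro d _; simp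
    · intro c _ hc
      unfold eps
      rw [dif_neg]
      intro hσ
      apply hc
      refine ⟨Quotient.lift c ?_, by simp, rfl⟩
      intro i j (hij : σ.SameCycle i j)
      obtain ⟨m, -, rfl⟩ := Equiv.Perm.SameCycle.exists_pow_eq' hij
      induction m with
      | zero => rfl
      | succ m ih =>
        rw [pow_succ', Equiv.Perm.mul_apply, hσ]
        exact ih ((Equiv.Perm.sameCycle_pow_right).mpr (Equiv.Perm.SameCycle.refl _ _))
    · intro d _; rfl
  rw [h1]
  simp only [eps_quot]
  have h2 := Finset.prod_univ_sum (fun _ : QQ σ => (Finset.univ : Finset (Fin (2 * k + 1))))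
    (fun q a => if (a : ℕ) % 2 = 1 then (-1 : ℤ) ^ (qcard σ q + 1) else 1)
  rw [Fintype.piFinset_univ] at h2
  rw [← h2]
  simp only [color_sum]
  rw [prod_parts σ (fun p => if p % 2 = 1 then 2 * (k : ℤ) + 1 else 1)]
  unfold numOddCycles fullCycleType
  rw [Fintype.card_fin]
  generalize hs : σ.cycleType + Multiset.replicate (n - σ.support.card) 1 = s
  have : ∀ s : Multiset ℕ, (s.map fun p => if p % 2 = 1 then 2 * (k : ℤ) + 1 else 1).prod =
      (2 * (k : ℤ) + 1) ^ Multiset.card (s.filter fun p => p % 2 = 1) := by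
    intro s
    induction s using Multiset.induction_on with
    | empty => simp
    | cons a s ih =>
      rw [Multiset.map_cons, Multiset.prod_cons, ih, Multiset.filter_cons]
      split_ifs with h
      · rw [Multiset.card_add, Multiset.card_singleton]; ring
      · simp
  convert this s
  rw [← hs]
  congr!

lemma numOdd_mod (n : ℕ) (σ : Equiv.Perm (Fin n)) :
    numOddCycles n σ % 2 = n % 2 ∧ numOddCycles n σ ≤ n := by
  have hsum : (fullCycleType n σ).sum = n := by
    unfold fullCycleType
    rw [Multiset.sum_add, Equiv.Perm.sum_cycleType, Multiset.sum_replicate]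
    have := Finset.card_le_univ σ.support
    rw [Fintype.card_fin] at this
    simp; omega
  have : ∀ s : Multiset ℕ, Multiset.card (s.filter fun p => p % 2 = 1) % 2 = s.sum % 2 ∧
      Multiset.card (s.filter fun p => p % 2 = 1) ≤ s.sum := by
    intro s
    induction s using Multiset.induction_on with
    | empty => simp
    | cons a s ih =>
      rw [Multiset.filter_cons, Multiset.card_add, Multiset.sum_cons]
      split_ifs with h
      · rw [Multiset.card_singleton]; omega
      · rw [Multiset.card_zero]; omega
  have h2 := this (fullCycleType n σ)
  rw [hsum] at h2
  unfold numOddCycles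
  convert h2

lemma subtypePerm_swap_sign {n : ℕ} (P : Fin n → Prop) [DecidablePred P] (x y : Fin n) (hxy : x ≠ y) (hP : P x ↔ P y)
    (h : ∀ i, P (Equiv.swap x y i) ↔ P i) :
    (Equiv.Perm.sign ((Equiv.swap x y).subtypePerm (p := P) h) : ℤ) = if P x then -1 else 1 := by
  split_ifs with hx
  · have e : (Equiv.swap x y).subtypePerm (p := P) h = Equiv.swap ⟨x, hx⟩ ⟨y, hP.mp hx⟩ := by
      ext ⟨i, hi⟩
      simp only [Equiv.Perm.subtypePerm_apply, Equiv.swap_apply_def, Subtype.mk.injEq]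
      split_ifs <;> rfl
    rw [e, Equiv.Perm.sign_swap (by simpa using hxy)]
    rfl
  · have e : (Equiv.swap x y).subtypePerm (p := P) h = 1 := by
      ext ⟨i, hi⟩
      simp only [Equiv.Perm.subtypePerm_apply, Equiv.Perm.coe_one, id]
      rw [Equiv.swap_apply_of_ne_of_ne]
      · rintro rfl; exact hx hi
      · rintro rfl; exact hx (hP.mpr hi)
    rw [e]; simp

lemma eps_mul {n K : ℕ} (σ τ : Equiv.Perm (Fin n)) (c : Fin n → Fin K)
    (h : ∀ i, c (σ i) = c i) (h' : ∀ i, c (τ i) = c i) : eps (σ * τ) c = eps σ c * eps τ c := by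
  unfold eps
  rw [dif_pos h, dif_pos h', dif_pos (by intro i; simp [h, h'])]
  rw [← Units.val_mul, ← Equiv.Perm.sign_mul, Equiv.Perm.subtypePerm_mul]

lemma eps_swap {n K : ℕ} (x y : Fin n) (hxy : x ≠ y) (c : Fin n → Fin K) (h : c x = c y) :
    eps (Equiv.swap x y) c = if (c x : ℕ) % 2 = 1 then -1 else 1 := by
  unfold eps
  have hc : ∀ i, c (Equiv.swap x y i) = c i := by
    intro i
    rw [Equiv.swap_apply_def]
    split_ifs with h1 h2
    · rw [h1, h]
    · rw [h2, h]
    · rfl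
  rw [dif_pos hc]
  exact subtypePerm_swap_sign (fun i => (c i : ℕ) % 2 = 1) x y hxy (by rw [h]) _

lemma SwP_sq {n K : ℕ} {b : Fin n → Fin K × Fin K} {π : Equiv.Perm (Fin n)} (h : SwP b π) (i : Fin n) :
    b ((π ^ 2) i) = b i := by
  rw [pow_two, Equiv.Perm.mul_apply, h, h, Prod.swap_swap]

lemma eps_flip {n K : ℕ} {b : Fin n → Fin K × Fin K} {π : Equiv.Perm (Fin n)} (h : SwP b π)
    (x y : Fin n) (hxy : x ≠ y) (hb : b x = b y) (hm : Mixed (b x)) :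
    eps ((π * Equiv.swap x y) ^ 2) (fun i => (b i).1) = - eps (π ^ 2) (fun i => (b i).1) := by
  have e : (π * Equiv.swap x y) ^ 2 = Equiv.swap (π x) (π y) * (π ^ 2 * Equiv.swap x y) := by
    have h1 : π * Equiv.swap x y = Equiv.swap (π x) (π y) * π := by
      rw [Equiv.mul_swap_eq_swap_mul]
    calc _ = (π * Equiv.swap x y) * (π * Equiv.swap x y) := pow_two _
      _ = (Equiv.swap (π x) (π y) * π) * (π * Equiv.swap x y) := by rw [h1]
      _ = _ := by rw [pow_two]; group
  have hsw : ∀ (x y : Fin n), b x = b y → ∀ i, (b (Equiv.swap x y i)).1 = (b i).1 := by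
    intro x y h i
    rw [Equiv.swap_apply_def]
    split_ifs with h1 h2
    · rw [h1, h]
    · rw [h2, h]
    · rfl
  have hb' : b (π x) = b (π y) := by rw [h, h, hb]
  rw [e, eps_mul, eps_mul, eps_swap _ _ hxy, eps_swap _ _ (fun h => hxy (π.injective h))]
  · have : (b (π x)).1 = (b x).2 := by rw [h]; rfl
    rw [this]
    unfold Mixed at hm
    rcases Nat.mod_two_eq_zero_or_one (b x).1 with h1 | h1
    · have h2 : ((b x).2 : ℕ) % 2 = 1 := by omega
      simp [h1, h2]
    · have h2 : ((b x).2 : ℕ) % 2 = 0 := by omega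
      simp [h1, h2]
  · rw [hb']
  · rw [hb]
  · exact fun i => congrArg Prod.fst (SwP_sq h i)
  · exact hsw _ _ hb
  · exact hsw _ _ hb'
  · intro i
    rw [Equiv.Perm.mul_apply]
    exact (congrArg Prod.fst (SwP_sq h _)).trans (hsw _ _ hb i)

lemma eps_good {n K : ℕ} {b : Fin n → Fin K × Fin K} {π : Equiv.Perm (Fin n)} (h : SwP b π)
    (hm : MInj b) : eps (π ^ 2) (fun i => (b i).1) = 1 := by
  let P : Fin n → Prop := fun i => ((b i).1 : ℕ) % 2 = 1 ∧ ((b i).2 : ℕ) % 2 = 1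
  have hP : ∀ i, P (π i) ↔ P i := by
    intro i
    simp only [P, h i, Prod.fst_swap, Prod.snd_swap]
    exact and_comm
  let θ : Equiv.Perm (Fin n) := Equiv.Perm.ofSubtype (π.subtypePerm hP)
  have hθ : ∀ i, P i → θ i = π i := fun i hi => Equiv.Perm.ofSubtype_subtypePerm_of_mem hP hi
  have hθ' : ∀ i, ¬ P i → θ i = i := fun i hi => Equiv.Perm.ofSubtype_subtypePerm_of_not_mem hP hi
  have hodd : ∀ i, ((b (θ i)).1 : ℕ) % 2 = 1 ↔ ((b i).1 : ℕ) % 2 = 1 := by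
    intro i
    by_cases hi : P i
    · rw [hθ i hi]
      have := (hP i).mpr hi
      exact ⟨fun _ => hi.1, fun _ => this.1⟩
    · rw [hθ' i hi]
  unfold eps
  rw [dif_pos (fun i => congrArg Prod.fst (SwP_sq h i))]
  have e : ∀ hh, (π ^ 2).subtypePerm (p := fun i => ((b i).1 : ℕ) % 2 = 1) hh =
      θ.subtypePerm (p := fun i => ((b i).1 : ℕ) % 2 = 1) hodd * θ.subtypePerm (p := fun i => ((b i).1 : ℕ) % 2 = 1) hodd := by
    intro hh
    ext ⟨i, hi⟩
    simp only [Equiv.Perm.subtypePerm_apply, Equiv.Perm.mul_apply]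
    by_cases hp : P i
    · rw [hθ i hp, hθ _ ((hP i).mpr hp)]; rfl
    · rw [hθ' i hp, hθ' i hp]
      have : (π ^ 2) i = i := by
        refine hm _ _ (SwP_sq h i) ?_
        rw [SwP_sq h]
        unfold Mixed
        simp only [P, not_and] at hp
        have := hp hi
        omega
      rw [this]
  rw [e, Equiv.Perm.sign_mul]
  rcases Int.units_eq_one_or (Equiv.Perm.sign (θ.subtypePerm (p := fun i => ((b i).1 : ℕ) % 2 = 1) hodd)) with h | h <;> rw [h] <;> rfl

lemma sum_b (n k : ℕ) (π : Equiv.Perm (Fin n)) :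
    ∑ c : Fin n → Fin (2 * k + 1), eps (π ^ 2) c =
      ∑ b : Fin n → Fin (2 * k + 1) × Fin (2 * k + 1),
        if SwP b π then eps (π ^ 2) (fun i => (b i).1) else 0 := by
  refine Finset.sum_of_injOn (fun c i => (c i, c (π i))) ?_ ?_ ?_ ?_
  · intro c _ c' _ h
    funext i
    exact congrArg Prod.fst (congrFun h i)
  · intro c _; simp
  · intro b _ hb
    rw [if_neg]
    intro hs
    apply hb
    refine ⟨fun i => (b i).1, by simp, ?_⟩
    funext i
    simp only [hs i, Prod.fst_swap]
  · intro c _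
    split_ifs with h
    · rfl
    · unfold eps
      rw [dif_neg]
      intro hc
      apply h
      intro i
      have := hc i
      rw [pow_two, Equiv.Perm.mul_apply] at this
      simp [this]

lemma main_count (n k : ℕ) :
    ∑ π : Equiv.Perm (Fin n), (2 * (k : ℤ) + 1) ^ numOddCycles n (π ^ 2) =
      n.factorial * ∑ τ ∈ invSet n, (Om n τ k : ℤ) := by
  have h0 := sum_good n k
  have h0' : (n.factorial : ℤ) * ∑ τ ∈ invSet n, (Om n τ k : ℤ) =
    ∑ b ∈ Finset.univ.filter (fun b : Fin n → Fin (2 * k + 1) × Fin (2 * k + 1) => Good b),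
      ((Finset.univ.filter fun π => SwP b π).card : ℤ) := by
    exact_mod_cast h0.symm
  rw [h0']
  simp only [← eps_sum, sum_b]
  rw [Finset.sum_comm, Finset.sum_filter]
  refine Finset.sum_congr rfl fun b _ => ?_
  by_cases hm : MInj b
  · have : ∀ π, (if SwP b π then eps (π ^ 2) (fun i => (b i).1) else 0) = if SwP b π then 1 else 0 := by
      intro π
      split_ifs with h
      · exact eps_good h hm
      · rfl
    simp only [this]
    split_ifs with hg
    · rw [Finset.card_filter]; push_cast; rfl
    · refine Finset.sum_eq_zero fun π _ => if_neg fun h => hg ⟨⟨π, h⟩, hm⟩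
  · rw [if_neg (fun hg : Good b => hm hg.2)]
    unfold MInj at hm
    push Not at hm
    obtain ⟨x, y, hb, hmx, hne⟩ := hm
    have hsb : ∀ i, b (Equiv.swap x y i) = b i := by
      intro i
      rw [Equiv.swap_apply_def]
      split_ifs with h1 h2
      · rw [h1, hb]
      · rw [h2, hb]
      · rfl
    have hS : ∀ π, SwP b (π * Equiv.swap x y) ↔ SwP b π := by
      intro π
      constructor
      · intro h i
        have := h (Equiv.swap x y i)
        simpa [hsb] using this
      · intro h i
        rw [Equiv.Perm.mul_apply, h, hsb]
    have hsum : ∑ π : Equiv.Perm (Fin n), (if SwP b π then eps (π ^ 2) (fun i => (b i).1) else 0) =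
        - ∑ π : Equiv.Perm (Fin n), (if SwP b π then eps (π ^ 2) (fun i => (b i).1) else 0) := by
      rw [← Finset.sum_neg_distrib]
      refine (Fintype.sum_equiv (Equiv.mulRight (Equiv.swap x y)) _ _ ?_).symm
      intro π
      rw [Equiv.coe_mulRight]
      simp only [hS]
      split_ifs with h
      · rw [eps_flip h x y hne hb hmx]
      · simp
    linarith

lemma aeval_uu_inj (Q : Polynomial ℚ) (h : Polynomial.aeval uu Q = 0) : Q = 0 := by
  by_contra hQ
  have hc : PowerSeries.constantCoeff uu = 0 := by
    have := congrArg (PowerSeries.constantCoeff (R := ℚ)) uu_mul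
    simpa using this
  have hu : uu ≠ 0 := by
    intro h0
    have := congrArg (PowerSeries.coeff (R := ℚ) 1) uu_mul
    rw [h0, zero_mul, show (4 : PowerSeries ℚ) = PowerSeries.C 4 from (map_ofNat _ 4).symm,
      PowerSeries.coeff_C_mul] at this
    simp at this
  obtain ⟨R, hR, hnd⟩ := Polynomial.exists_eq_pow_rootMultiplicity_mul_and_not_dvd Q hQ 0
  rw [hR, map_mul, map_pow] at h
  simp only [Polynomial.C_0, sub_zero, Polynomial.aeval_X] at h hnd
  rcases mul_eq_zero.mp h with h | h
  · exact pow_ne_zero _ hu h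
  · apply hnd
    rw [Polynomial.X_dvd_iff]
    have h2 := congrArg (PowerSeries.constantCoeff (R := ℚ)) h
    rw [Polynomial.aeval_def, Polynomial.hom_eval₂, hc, Polynomial.eval₂_at_zero] at h2
    simpa using h2

lemma series_id (n : ℕ) :
    (n.factorial : PowerSeries ℚ) * ∑ τ ∈ invSet n, PowerSeries.mk (fun k => (Om n τ k : ℚ)) =
      ∑ m ∈ (Finset.range (n + 1)).filter (fun m => m % 2 = n % 2),
        (dnk n m : PowerSeries ℚ) *
          ∑ σ : Equiv.Perm (Fin m), PowerSeries.mk (fun k => (Om m σ k : ℚ)) := by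
  ext k
  have hc : ∀ a : ℕ, (a : PowerSeries ℚ) = PowerSeries.C (a : ℚ) := fun a => (map_natCast _ a).symm
  simp only [hc, PowerSeries.coeff_C_mul, map_sum, PowerSeries.coeff_mk]
  have h1 : ∑ π : Equiv.Perm (Fin n), (2 * (k : ℚ) + 1) ^ numOddCycles n (π ^ 2) =
      n.factorial * ∑ τ ∈ invSet n, (Om n τ k : ℚ) := by
    exact_mod_cast main_count n k
  rw [← h1]
  have h2 : ∀ m, ∑ σ : Equiv.Perm (Fin m), (Om m σ k : ℚ) = (2 * (k : ℚ) + 1) ^ m := by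
    intro m
    exact_mod_cast sum_Om m k
  simp only [h2]
  rw [← Finset.sum_fiberwise_of_maps_to (s := Finset.univ)
    (t := (Finset.range (n + 1)).filter (fun m => m % 2 = n % 2))
    (g := fun π : Equiv.Perm (Fin n) => numOddCycles n (π ^ 2))]
  · refine Finset.sum_congr rfl fun m _ => ?_
    rw [Finset.sum_congr rfl (g := fun _ => (2 * (k : ℚ) + 1) ^ m)]
    · rw [Finset.sum_const, nsmul_eq_mul]
      unfold dnk
      congr!
    · intro π hπ
      rw [(Finset.mem_filter.mp hπ).2]
  · intro π _
    have := numOdd_mod n (π ^ 2)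
    rw [Finset.mem_filter, Finset.mem_range]
    omega

lemma series_uu (n : ℕ) :
    (n.factorial : PowerSeries ℚ) * ∑ τ ∈ invSet n, uu ^ lpk n τ =
      ∑ m ∈ (Finset.range (n + 1)).filter (fun m => m % 2 = n % 2),
        (dnk n m : PowerSeries ℚ) * (1 - uu) ^ ((n - m) / 2) *
          ∑ σ : Equiv.Perm (Fin m), uu ^ lpk m σ := by
  have hne : (1 + PowerSeries.X : PowerSeries ℚ) ^ n ≠ 0 := by
    apply pow_ne_zero
    intro h
    have := congrArg (PowerSeries.constantCoeff (R := ℚ)) h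
    simp at this
  apply mul_left_cancel₀ hne
  have h := congrArg (fun z => (1 - PowerSeries.X) ^ (n + 1) * z) (series_id n)
  rw [Finset.mul_sum] at h
  have hl : (1 - PowerSeries.X : PowerSeries ℚ) ^ (n + 1) * ∑ τ ∈ invSet n,
      (n.factorial : PowerSeries ℚ) * PowerSeries.mk (fun k => (Om n τ k : ℚ)) =
      (1 + PowerSeries.X) ^ n * ((n.factorial : PowerSeries ℚ) * ∑ τ ∈ invSet n, uu ^ lpk n τ) := by
    rw [Finset.mul_sum, Finset.mul_sum, Finset.mul_sum]
    refine Finset.sum_congr rfl fun τ _ => ?_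
    linear_combination (n.factorial : PowerSeries ℚ) * Om_gf n τ
  rw [← hl, h, Finset.mul_sum, Finset.mul_sum]
  refine Finset.sum_congr rfl fun m hm => ?_
  rw [Finset.mem_filter, Finset.mem_range] at hm
  have hr : (1 - PowerSeries.X : PowerSeries ℚ) ^ (m + 1) *
      ∑ σ : Equiv.Perm (Fin m), PowerSeries.mk (fun k => (Om m σ k : ℚ)) =
      (1 + PowerSeries.X) ^ m * ∑ σ : Equiv.Perm (Fin m), uu ^ lpk m σ := by
    rw [Finset.mul_sum, Finset.mul_sum]
    exact Finset.sum_congr rfl fun σ _ => Om_gf m σ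
  obtain ⟨j, rfl⟩ : ∃ j, n = m + 2 * j := ⟨(n - m) / 2, by omega⟩
  rw [show (m + 2 * j - m) / 2 = j by omega]
  have hj : (1 - PowerSeries.X : PowerSeries ℚ) ^ (2 * j) = (1 + PowerSeries.X) ^ (2 * j) * (1 - uu) ^ j := by
    rw [pow_mul, pow_mul, ← mul_pow]
    congr 1
    linear_combination uu_mul
  calc _ = (dnk (m + 2 * j) m : PowerSeries ℚ) * (1 - PowerSeries.X) ^ (2 * j) *
        ((1 - PowerSeries.X : PowerSeries ℚ) ^ (m + 1) *
      ∑ σ : Equiv.Perm (Fin m), PowerSeries.mk (fun k => (Om m σ k : ℚ))) := by ring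
    _ = _ := by rw [hr, hj]; ring

theorem stmt15 (n : ℕ) (hn : 1 ≤ n) :
    (n.factorial : Polynomial ℚ) * ∑ π ∈ invSet n, Polynomial.X ^ lpk n π
      = ∑ k ∈ (Finset.range (n + 1)).filter (fun k => k % 2 = n % 2),
          (dnk n k : Polynomial ℚ) * (1 - Polynomial.X) ^ ((n - k) / 2)
            * leftPeakP k := by
  rw [← sub_eq_zero]
  apply aeval_uu_inj
  rw [map_sub, sub_eq_zero]
  unfold leftPeakP
  simp only [map_mul, map_sum, map_pow, map_sub, map_one, map_natCast, Polynomial.aeval_X]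
  exact series_uu n

end
end
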